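/- arXiv:1506.01655 — 2 statements merged into one kernel-verified Lean document; each statement's English description precedes it below -/
import Mathlib

section
/- There exists a constant C > 0, depending only on L, η, β, κ, τ, m, δ and p (and independent of λ), such that every solution (u, w, θ, q) of the resolvent system with data (f₁, f₂, f₃, f₄) which additionally satisfies ∫₀ᴸ θ(x) dx = 0 obeys ∫₀ᴸ |θ(x)|² dx ≤ C ‖F‖ ‖U‖. -/
open MeasureTheory Set intervalIntegral Complex

noncomputable section

/-- A (smooth) solution of the resolvent system `(iλ − 𝒜)U = F` with clamped/zero-flux
boundary conditions: the four ODEs on `(0, L)` together with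
`u(0) = u(L) = 0`, `w(0) = w(L) = 0`, `q(0) = q(L) = 0`. -/
def ResolventSol (L η β κ τ : ℝ) (m δ p : ℝ → ℝ) (lam : ℝ)
    (f₁ f₂ f₃ f₄ u w θ q : ℝ → ℂ) : Prop :=
  ContDiff ℝ (⊤ : ℕ∞) u ∧ ContDiff ℝ (⊤ : ℕ∞) w ∧ ContDiff ℝ (⊤ : ℕ∞) θ ∧ ContDiff ℝ (⊤ : ℕ∞) q ∧
  ContDiff ℝ (⊤ : ℕ∞) f₁ ∧ ContDiff ℝ (⊤ : ℕ∞) f₂ ∧ ContDiff ℝ (⊤ : ℕ∞) f₃ ∧ ContDiff ℝ (⊤ : ℕ∞) f₄ ∧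
  (∀ x ∈ Ioo (0 : ℝ) L,
    (Complex.I * (lam : ℂ) * u x - w x = f₁ x) ∧
    (Complex.I * (lam : ℂ) * (m x : ℂ) * w x
        - deriv (fun y => (p y : ℂ) * deriv u y + 2 * (δ y : ℂ) * deriv w y) x
        + (η : ℂ) * deriv θ x = (m x : ℂ) * f₂ x) ∧
    (Complex.I * (lam : ℂ) * θ x
        + deriv (fun y => (κ : ℂ) * q y + (η : ℂ) * w y) x = f₃ x) ∧
    (Complex.I * (lam : ℂ) * (τ : ℂ) * q x + (κ : ℂ) * deriv θ x + (β : ℂ) * q x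
        = (τ : ℂ) * f₄ x)) ∧
  u 0 = 0 ∧ u L = 0 ∧ w 0 = 0 ∧ w L = 0 ∧ q 0 = 0 ∧ q L = 0

/-- Squared phase-space norm of `U = (u, w, θ, q)`. -/
def normUsq (L τ : ℝ) (m p : ℝ → ℝ) (u w θ q : ℝ → ℂ) : ℝ :=
  (∫ x in (0 : ℝ)..L, p x * ‖deriv u x‖ ^ 2) + (∫ x in (0 : ℝ)..L, m x * ‖w x‖ ^ 2)
    + (∫ x in (0 : ℝ)..L, ‖θ x‖ ^ 2) + τ * ∫ x in (0 : ℝ)..L, ‖q x‖ ^ 2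

/-- Squared phase-space norm of the data `F = (f₁, f₂, f₃, f₄)`. -/
def normFsq (L τ : ℝ) (m p : ℝ → ℝ) (f₁ f₂ f₃ f₄ : ℝ → ℂ) : ℝ :=
  (∫ x in (0 : ℝ)..L, p x * ‖deriv f₁ x‖ ^ 2) + (∫ x in (0 : ℝ)..L, m x * ‖f₂ x‖ ^ 2)
    + (∫ x in (0 : ℝ)..L, ‖f₃ x‖ ^ 2) + τ * ∫ x in (0 : ℝ)..L, ‖f₄ x‖ ^ 2

lemma aux_sqrt_opt (A B Z C : ℝ) (hC : 0 < C) (hA : 0 ≤ A) (hB : 0 ≤ B)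
    (h : ∀ t : ℝ, 0 < t → Z ≤ C * (t * A + t⁻¹ * B)) :
    Z ≤ 2 * C * Real.sqrt A * Real.sqrt B := by
  obtain ⟨a, ha, rfl⟩ : ∃ a : ℝ, 0 ≤ a ∧ A = a ^ 2 :=
    ⟨Real.sqrt A, Real.sqrt_nonneg _, (Real.sq_sqrt hA).symm⟩
  obtain ⟨b, hb, rfl⟩ : ∃ b : ℝ, 0 ≤ b ∧ B = b ^ 2 :=
    ⟨Real.sqrt B, Real.sqrt_nonneg _, (Real.sq_sqrt hB).symm⟩
  rw [Real.sqrt_sq ha, Real.sqrt_sq hb]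
  have key : ∀ e : ℝ, 0 < e → Z ≤ C * (2 * (a * b) + e * (a + b)) := by
    intro e he
    have hae : 0 < a + e := by linarith
    have hbe : 0 < b + e := by linarith
    refine (h ((b + e) / (a + e)) (by positivity)).trans ?_
    apply mul_le_mul_of_nonneg_left _ hC.le
    have h1 : (b + e) / (a + e) * a ^ 2 ≤ (b + e) * a := by
      rw [div_mul_eq_mul_div, div_le_iff₀ hae]
      have : 0 ≤ (b + e) * a * e := by positivity
      nlinarith
    have h2 : ((b + e) / (a + e))⁻¹ * b ^ 2 ≤ (a + e) * b := by
      rw [inv_div, div_mul_eq_mul_div, div_le_iff₀ hbe]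
      have : 0 ≤ (a + e) * b * e := by positivity
      nlinarith
    linarith
  apply le_of_forall_pos_le_add
  intro e he
  have hs : 0 < C * (a + b) + 1 := by positivity
  have := key (e / (C * (a + b) + 1)) (by positivity)
  have h3 : e / (C * (a + b) + 1) * (C * (a + b)) ≤ e := by
    rw [div_mul_eq_mul_div, div_le_iff₀ hs]
    nlinarith
  nlinarith

/-- Poincaré inequality for a primitive. -/
lemma aux_poincare (L : ℝ) (hL : 0 < L) (g : ℝ → ℂ) (hg : Continuous g) :
    ∫ x in (0:ℝ)..L, ‖∫ y in (0:ℝ)..x, g y‖ ^ 2 ≤ L ^ 2 * ∫ x in (0:ℝ)..L, ‖g x‖ ^ 2 := by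
  set N := ∫ x in (0:ℝ)..L, ‖g x‖ with hN
  have hint : ∀ a b : ℝ, IntervalIntegrable (fun x => ‖g x‖) volume a b :=
    fun a b => hg.norm.intervalIntegrable a b
  have hint2 : IntervalIntegrable (fun x => ‖g x‖ ^ 2) volume 0 L :=
    (hg.norm.pow 2).intervalIntegrable _ _
  have h1 : ∀ x ∈ Icc (0:ℝ) L, ‖∫ y in (0:ℝ)..x, g y‖ ≤ N := by
    intro x hx
    refine (intervalIntegral.norm_integral_le_integral_norm hx.1).trans ?_
    rw [hN, ← intervalIntegral.integral_add_adjacent_intervals (hint 0 x) (hint x L)]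
    have : 0 ≤ ∫ y in x..L, ‖g y‖ :=
      intervalIntegral.integral_nonneg hx.2 (fun y _ => norm_nonneg _)
    linarith
  have h2 : N ^ 2 ≤ L * ∫ x in (0:ℝ)..L, ‖g x‖ ^ 2 := by
    have h3 : 0 ≤ ∫ x in (0:ℝ)..L, (‖g x‖ ^ 2 + (- (2 * (N / L)) * ‖g x‖ + (N / L) ^ 2)) := by
      apply intervalIntegral.integral_nonneg hL.le
      intro x _
      nlinarith [sq_nonneg (‖g x‖ - N / L)]
    rw [intervalIntegral.integral_add hint2
      (((hint 0 L).const_mul _).add intervalIntegrable_const),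
      intervalIntegral.integral_add ((hint 0 L).const_mul _) intervalIntegrable_const,
      intervalIntegral.integral_const_mul, intervalIntegral.integral_const, ← hN] at h3
    simp only [sub_zero, smul_eq_mul] at h3
    have h4 : -(2 * (N / L)) * N + L * (N / L) ^ 2 = - (N ^ 2 / L) := by
      field_simp; ring
    have h5 : N ^ 2 / L ≤ ∫ x in (0:ℝ)..L, ‖g x‖ ^ 2 := by linarith
    rw [div_le_iff₀ hL] at h5
    linarith
  have hc : Continuous (fun x => ∫ y in (0:ℝ)..x, g y) :=
    intervalIntegral.continuous_primitive (fun a b => hg.intervalIntegrable a b) 0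
  calc ∫ x in (0:ℝ)..L, ‖∫ y in (0:ℝ)..x, g y‖ ^ 2 ≤ ∫ x in (0:ℝ)..L, N ^ 2 := by
        apply intervalIntegral.integral_mono_on hL.le
          ((hc.norm.pow 2).intervalIntegrable _ _) intervalIntegrable_const
        intro x hx
        exact pow_le_pow_left₀ (norm_nonneg _) (h1 x hx) 2
    _ = L * N ^ 2 := by simp
    _ ≤ L ^ 2 * ∫ x in (0:ℝ)..L, ‖g x‖ ^ 2 := by nlinarith

/-- Young's inequality for the real inner product. -/
lemma aux_young (z w : ℂ) (t : ℝ) (ht : 0 < t) :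
    |inner ℝ z w| ≤ (t * ‖z‖ ^ 2 + t⁻¹ * ‖w‖ ^ 2) / 2 := by
  refine (abs_real_inner_le_norm z w).trans ?_
  have h : t * ‖z‖ ^ 2 + t⁻¹ * ‖w‖ ^ 2 - 2 * (‖z‖ * ‖w‖) = t⁻¹ * (t * ‖z‖ - ‖w‖) ^ 2 := by
    field_simp; ring
  have : 0 ≤ t⁻¹ * (t * ‖z‖ - ‖w‖) ^ 2 := by positivity
  linarith

/-- FTC with coefficients Lipschitz on `[0,L]`. -/
lemma aux_ftc (L : ℝ) (hL : 0 < L) (p δ : ℝ → ℝ)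
    (hpLip : ∃ K, LipschitzOnWith K p (Icc 0 L))
    (hδLip : ∃ K, LipschitzOnWith K δ (Icc 0 L))
    (a b c : ℝ → ℝ) (ha : ContDiff ℝ 1 a) (hb : ContDiff ℝ 1 b) (hc : ContDiff ℝ 1 c)
    (h0 : p 0 * a 0 + δ 0 * b 0 + c 0 = 0) (hLL : p L * a L + δ L * b L + c L = 0)
    (D : ℝ → ℝ)
    (hD : ∀ x ∈ Ioo (0:ℝ) L, ∀ p' δ', HasDerivAt p p' x → HasDerivAt δ δ' x →
      p' * a x + p x * deriv a x + (δ' * b x + δ x * deriv b x) + deriv c x = D x) :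
    ∫ x in (0:ℝ)..L, D x = 0 := by
  obtain ⟨K1, hp⟩ := hpLip
  obtain ⟨K2, hd⟩ := hδLip
  rw [← uIcc_of_le hL.le] at hp hd
  have smooth : ∀ f : ℝ → ℝ, ContDiff ℝ 1 f → AbsolutelyContinuousOnInterval f 0 L := by
    intro f hf
    obtain ⟨K, hK⟩ := hf.contDiffOn.exists_lipschitzOnWith one_ne_zero (convex_uIcc 0 L)
      isCompact_uIcc
    exact hK.absolutelyContinuousOnInterval
  have hpa := hp.absolutelyContinuousOnInterval
  have hda := hd.absolutelyContinuousOnInterval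
  have hE : AbsolutelyContinuousOnInterval (fun x => p x * a x + δ x * b x + c x) 0 L :=
    ((hpa.fun_mul (smooth a ha)).fun_add (hda.fun_mul (smooth b hb))).fun_add (smooth c hc)
  have h1 := hE.integral_deriv_eq_sub
  simp only [h0, hLL, sub_zero] at h1
  refine Eq.trans ?_ h1
  apply intervalIntegral.integral_congr_ae
  have hne : ∀ᵐ x : ℝ, x ≠ L := by
    simp [ae_iff]
  filter_upwards [hpa.ae_differentiableAt, hda.ae_differentiableAt, hne] with x hx1 hx2 hx3 hx4
  have hx5 : x ∈ uIcc 0 L := uIoc_subset_uIcc hx4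
  have hpx := (hx1 hx5).hasDerivAt
  have hdx := (hx2 hx5).hasDerivAt
  rw [uIoc_of_le hL.le] at hx4
  have hax := (ha.differentiable one_ne_zero x).hasDerivAt
  have hbx := (hb.differentiable one_ne_zero x).hasDerivAt
  have hcx := (hc.differentiable one_ne_zero x).hasDerivAt
  rw [← hD x ⟨hx4.1, lt_of_le_of_ne hx4.2 hx3⟩ _ _ hpx hdx]
  exact (((hpx.mul hax).add (hdx.mul hbx)).add hcx).deriv.symm

lemma aux_energy (L η β κ τ : ℝ) (hL : 0 < L)
    (m δ p : ℝ → ℝ)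
    (hδLip : ∃ K, LipschitzOnWith K δ (Icc 0 L))
    (hpLip : ∃ K, LipschitzOnWith K p (Icc 0 L))
    (lam : ℝ) (f₁ f₂ f₃ f₄ u w θ q : ℝ → ℂ)
    (h : ResolventSol L η β κ τ m δ p lam f₁ f₂ f₃ f₄ u w θ q) :
    ∫ x in (0:ℝ)..L, (2 * (δ x * ‖deriv w x‖ ^ 2) + β * ‖q x‖ ^ 2
      - (p x * inner ℝ (deriv f₁ x) (deriv u x) + m x * inner ℝ (f₂ x) (w x)
        + inner ℝ (f₃ x) (θ x) + τ * inner ℝ (f₄ x) (q x))) = 0 := by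
  obtain ⟨hu, hw, hθ, hq, hf₁, hf₂, hf₃, hf₄, heq, hu0, huL, hw0, hwL, hq0, hqL⟩ := h
  have hu' : ContDiff ℝ 1 (deriv u) := (contDiff_infty_iff_deriv.1 hu).2.of_le (by simp)
  have hw' : ContDiff ℝ 1 (deriv w) := (contDiff_infty_iff_deriv.1 hw).2.of_le (by simp)
  have hw1 : ContDiff ℝ 1 w := hw.of_le (by simp)
  have hθ1 : ContDiff ℝ 1 θ := hθ.of_le (by simp)
  have hq1 : ContDiff ℝ 1 q := hq.of_le (by simp)
  refine aux_ftc L hL p δ hpLip hδLip (fun x => inner ℝ (w x) (deriv u x))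
    (fun x => 2 * inner ℝ (w x) (deriv w x))
    (fun x => - η * inner ℝ (w x) (θ x) + (- κ) * inner ℝ (θ x) (q x))
    (hw1.inner ℝ hu') (contDiff_const.mul (hw1.inner ℝ hw'))
    ((contDiff_const.mul (hw1.inner ℝ hθ1)).add (contDiff_const.mul (hθ1.inner ℝ hq1)))
    (by simp [hw0, hq0]) (by simp [hwL, hqL]) _ ?_
  intro x hx p' δ' hp hd
  have du := (hu.differentiable (by simp) x).hasDerivAt
  have df := (hf₁.differentiable (by simp) x).hasDerivAt
  have dw := (hw.differentiable (by simp) x).hasDerivAt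
  have dθ := (hθ.differentiable (by simp) x).hasDerivAt
  have dq := (hq.differentiable (by simp) x).hasDerivAt
  have ddu := (hu'.differentiable (by simp) x).hasDerivAt
  have ddw := (hw'.differentiable (by simp) x).hasDerivAt
  obtain ⟨-, e2, e3, e4⟩ := heq x hx
  have e1 : deriv w x = Complex.I * (lam : ℂ) * deriv u x - deriv f₁ x := by
    have hev : w =ᶠ[nhds x] fun y => Complex.I * (lam : ℂ) * u y - f₁ y := by
      filter_upwards [isOpen_Ioo.mem_nhds hx] with y hy
      have := (heq y hy).1
      rw [← this]; ring
    rw [hev.deriv_eq]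
    exact ((du.const_mul _).sub df).deriv
  have e2' : deriv (fun y => (p y : ℂ) * deriv u y + 2 * (δ y : ℂ) * deriv w y) x
      = ((p' : ℂ) * deriv u x + (p x : ℂ) * deriv (deriv u) x)
        + ((2 * (δ' : ℂ)) * deriv w x + (2 * (δ x : ℂ)) * deriv (deriv w) x) :=
    ((hp.ofReal_comp.mul ddu).add ((hd.ofReal_comp.const_mul 2).mul ddw)).deriv
  have e3' : deriv (fun y => (κ : ℂ) * q y + (η : ℂ) * w y) x
      = (κ : ℂ) * deriv q x + (η : ℂ) * deriv w x :=
    ((dq.const_mul _).add (dw.const_mul _)).deriv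
  rw [e2'] at e2
  rw [e3'] at e3
  have da : deriv (fun x => inner ℝ (w x) (deriv u x)) x = _ := (dw.inner ℝ ddu).deriv
  have db : deriv (fun x => 2 * inner ℝ (w x) (deriv w x)) x = _ :=
    ((dw.inner ℝ ddw).const_mul 2).deriv
  have dc : deriv (fun x => - η * inner ℝ (w x) (θ x) + (- κ) * inner ℝ (θ x) (q x)) x = _ :=
    (((dw.inner ℝ dθ).const_mul (-η)).add ((dθ.inner ℝ dq).const_mul (-κ))).deriv
  rw [da, db, dc]
  clear da db dc e2' e3'
  generalize deriv (deriv u) x = u2 at *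
  generalize deriv (deriv w) x = w2 at *
  generalize deriv u x = u1 at *
  generalize deriv w x = w1 at *
  generalize deriv θ x = θ1 at *
  generalize deriv q x = q1 at *
  generalize deriv f₁ x = g1 at *
  have e1r := congrArg Complex.re e1
  have e1i := congrArg Complex.im e1
  have e2r := congrArg Complex.re e2
  have e2i := congrArg Complex.im e2
  have e3r := congrArg Complex.re e3
  have e3i := congrArg Complex.im e3
  have e4r := congrArg Complex.re e4
  have e4i := congrArg Complex.im e4
  simp only [Complex.add_re, Complex.sub_re, Complex.mul_re, Complex.add_im, Complex.sub_im,
    Complex.mul_im, Complex.I_re, Complex.I_im, Complex.ofReal_re, Complex.ofReal_im,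
    Complex.re_ofNat, Complex.im_ofNat] at e1r e1i e2r e2i e3r e3i e4r e4i
  simp only [Complex.inner, Complex.mul_re, Complex.conj_re, Complex.conj_im, Complex.sq_norm,
    Complex.normSq_apply]
  linear_combination (-(w x).re) * e2r - (w x).im * e2i - (θ x).re * e3r - (θ x).im * e3i
    - (q x).re * e4r - (q x).im * e4i + p x * u1.re * e1r + p x * u1.im * e1i

lemma aux_diss (L η β κ τ : ℝ) (hL : 0 < L) (hτ : 0 < τ)
    (m δ p : ℝ → ℝ)
    (hmLip : ∃ K, LipschitzOnWith K m (Icc 0 L))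
    (hδLip : ∃ K, LipschitzOnWith K δ (Icc 0 L))
    (hpLip : ∃ K, LipschitzOnWith K p (Icc 0 L))
    (hmpos : ∀ x ∈ Icc (0 : ℝ) L, 0 < m x)
    (hppos : ∀ x ∈ Icc (0 : ℝ) L, 0 < p x)
    (lam : ℝ) (f₁ f₂ f₃ f₄ u w θ q : ℝ → ℂ)
    (h : ResolventSol L η β κ τ m δ p lam f₁ f₂ f₃ f₄ u w θ q) (t : ℝ) (ht : 0 < t) :
    2 * (∫ x in (0:ℝ)..L, δ x * ‖deriv w x‖ ^ 2) + β * (∫ x in (0:ℝ)..L, ‖q x‖ ^ 2)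
      ≤ (t * normFsq L τ m p f₁ f₂ f₃ f₄ + t⁻¹ * normUsq L τ m p u w θ q) / 2 := by
  have hen := aux_energy L η β κ τ hL m δ p hδLip hpLip lam f₁ f₂ f₃ f₄ u w θ q h
  obtain ⟨hu, hw, hθ, hq, hf₁, hf₂, hf₃, hf₄, -⟩ := h
  obtain ⟨_, hm⟩ := hmLip
  obtain ⟨_, hd⟩ := hδLip
  obtain ⟨_, hp⟩ := hpLip
  have cm := hm.continuousOn
  have cd := hd.continuousOn
  have cp := hp.continuousOn
  have cu : Continuous (deriv u) := hu.continuous_deriv (by simp)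
  have cw : Continuous (deriv w) := hw.continuous_deriv (by simp)
  have cf : Continuous (deriv f₁) := hf₁.continuous_deriv (by simp)
  have cw0 := hw.continuous
  have cθ := hθ.continuous
  have cq := hq.continuous
  have cf2 := hf₂.continuous
  have cf3 := hf₃.continuous
  have cf4 := hf₄.continuous
  have ii : ∀ {f : ℝ → ℝ}, ContinuousOn f (Icc 0 L) → IntervalIntegrable f volume 0 L :=
    fun hf => hf.intervalIntegrable_of_Icc hL.le
  have sq2 : ∀ {g : ℝ → ℂ}, Continuous g → Continuous (fun x => ‖g x‖ ^ 2) :=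
    fun hg => hg.norm.pow 2
  have i1 := ii (cd.fun_mul (sq2 cw).continuousOn)
  have i2 := ii (sq2 cq).continuousOn
  have a1 := ii (cp.fun_mul (sq2 cf).continuousOn)
  have a2 := ii (cm.fun_mul (sq2 cf2).continuousOn)
  have a3 := ii (sq2 cf3).continuousOn
  have a4 := ii (sq2 cf4).continuousOn
  have b1 := ii (cp.fun_mul (sq2 cu).continuousOn)
  have b2 := ii (cm.fun_mul (sq2 cw0).continuousOn)
  have b3 := ii (sq2 cθ).continuousOn
  have r1 := ii (cp.fun_mul (cf.inner (𝕜 := ℝ) cu).continuousOn)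
  have r2 := ii (cm.fun_mul (cf2.inner (𝕜 := ℝ) cw0).continuousOn)
  have r3 := ii (cf3.inner (𝕜 := ℝ) cθ).continuousOn
  have r4 := ii (cf4.inner (𝕜 := ℝ) cq).continuousOn
  have iF := ((a1.add a2).add a3).add (a4.const_mul τ)
  have iU := ((b1.add b2).add b3).add (i2.const_mul τ)
  have iR := ((r1.add r2).add r3).add (r4.const_mul τ)
  have iD := (i1.const_mul 2).add (i2.const_mul β)
  have hsub := intervalIntegral.integral_sub iD iR
  have hD := intervalIntegral.integral_add (i1.const_mul 2) (i2.const_mul β)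
  rw [intervalIntegral.integral_const_mul, intervalIntegral.integral_const_mul] at hD
  rw [← hD]
  have eF : normFsq L τ m p f₁ f₂ f₃ f₄ = ∫ x in (0:ℝ)..L, (p x * ‖deriv f₁ x‖ ^ 2
      + m x * ‖f₂ x‖ ^ 2 + ‖f₃ x‖ ^ 2 + τ * ‖f₄ x‖ ^ 2) := by
    rw [intervalIntegral.integral_add ((a1.add a2).add a3) (a4.const_mul τ),
      intervalIntegral.integral_add (a1.add a2) a3, intervalIntegral.integral_add a1 a2,
      intervalIntegral.integral_const_mul]
    rfl
  have eU : normUsq L τ m p u w θ q = ∫ x in (0:ℝ)..L, (p x * ‖deriv u x‖ ^ 2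
      + m x * ‖w x‖ ^ 2 + ‖θ x‖ ^ 2 + τ * ‖q x‖ ^ 2) := by
    rw [intervalIntegral.integral_add ((b1.add b2).add b3) (i2.const_mul τ),
      intervalIntegral.integral_add (b1.add b2) b3, intervalIntegral.integral_add b1 b2,
      intervalIntegral.integral_const_mul]
    rfl
  have hmono := intervalIntegral.integral_mono_on hL.le iR
    (((iF.const_mul t).add (iU.const_mul t⁻¹)).div_const 2) (by
      intro x hx
      have y1 := (le_abs_self _).trans (aux_young (deriv f₁ x) (deriv u x) t ht)
      have y2 := (le_abs_self _).trans (aux_young (f₂ x) (w x) t ht)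
      have y3 := (le_abs_self _).trans (aux_young (f₃ x) (θ x) t ht)
      have y4 := (le_abs_self _).trans (aux_young (f₄ x) (q x) t ht)
      have z1 := mul_le_mul_of_nonneg_left y1 (hppos x hx).le
      have z2 := mul_le_mul_of_nonneg_left y2 (hmpos x hx).le
      have z4 := mul_le_mul_of_nonneg_left y4 hτ.le
      linarith)
  rw [intervalIntegral.integral_div,
    intervalIntegral.integral_add (iF.const_mul t) (iU.const_mul t⁻¹),
    intervalIntegral.integral_const_mul, intervalIntegral.integral_const_mul] at hmono
  rw [eF, eU]
  refine le_trans (le_of_eq ?_) hmono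
  have : _ = (0:ℝ) := hsub.symm.trans hen
  linarith

/-- Identity for `κ‖θ‖²` integrated. -/
lemma aux_theta (L η β κ τ : ℝ) (hL : 0 < L)
    (m δ p : ℝ → ℝ)
    (lam : ℝ) (f₁ f₂ f₃ f₄ u w θ q : ℝ → ℂ)
    (h : ResolventSol L η β κ τ m δ p lam f₁ f₂ f₃ f₄ u w θ q)
    (hmean : (∫ x in (0 : ℝ)..L, θ x) = 0) :
    ∫ x in (0:ℝ)..L, (κ * ‖θ x‖ ^ 2 + τ * inner ℝ (f₄ x) (∫ y in (0:ℝ)..x, θ y)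
      - β * inner ℝ (q x) (∫ y in (0:ℝ)..x, θ y)
      + τ * inner ℝ (∫ y in (0:ℝ)..x, f₃ y) (q x)
      - τ * κ * ‖q x‖ ^ 2 - τ * η * inner ℝ (q x) (w x)) = 0 := by
  obtain ⟨hu, hw, hθ, hq, hf₁, hf₂, hf₃, hf₄, heq, hu0, huL, hw0, hwL, hq0, hqL⟩ := h
  have dΦ : ∀ x, HasDerivAt (fun x => ∫ y in (0:ℝ)..x, θ y) (θ x) x := fun x =>
    hθ.continuous.integral_hasStrictDerivAt 0 x |>.hasDerivAt
  have dP : ∀ x, HasDerivAt (fun x => ∫ y in (0:ℝ)..x, f₃ y) (f₃ x) x := fun x =>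
    hf₃.continuous.integral_hasStrictDerivAt 0 x |>.hasDerivAt
  have dw := fun x => (hw.differentiable (by simp) x).hasDerivAt
  have dθ := fun x => (hθ.differentiable (by simp) x).hasDerivAt
  have dq := fun x => (hq.differentiable (by simp) x).hasDerivAt
  have cΦ : Continuous (fun x => ∫ y in (0:ℝ)..x, θ y) :=
    continuous_iff_continuousAt.2 fun x => (dΦ x).continuousAt
  have cP : Continuous (fun x => ∫ y in (0:ℝ)..x, f₃ y) :=
    continuous_iff_continuousAt.2 fun x => (dP x).continuousAt
  have key : ∀ x ∈ Icc (0:ℝ) L, Complex.I * lam * (∫ y in (0:ℝ)..x, θ y) + κ * q x + η * w x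
      - (∫ y in (0:ℝ)..x, f₃ y) = 0 := by
    intro x hx
    have hd : ∀ x, HasDerivAt (fun x => Complex.I * lam * (∫ y in (0:ℝ)..x, θ y) + κ * q x
        + η * w x - (∫ y in (0:ℝ)..x, f₃ y))
        (Complex.I * lam * θ x + κ * deriv q x + η * deriv w x - f₃ x) x := fun x =>
      ((((dΦ x).const_mul _).add ((dq x).const_mul _)).add ((dw x).const_mul _)).sub (dP x)
    have := constant_of_derivWithin_zero (a := 0) (b := L)
      (f := fun x => Complex.I * lam * (∫ y in (0:ℝ)..x, θ y) + κ * q x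
        + η * w x - (∫ y in (0:ℝ)..x, f₃ y))
      (fun y _ => (hd y).differentiableAt.differentiableWithinAt) (by
        have hz : ∀ y ∈ Icc (0:ℝ) L,
            Complex.I * lam * θ y + κ * deriv q y + η * deriv w y - f₃ y = 0 := by
          have hcl : Icc (0:ℝ) L = closure (Ioo 0 L) := (closure_Ioo hL.ne).symm
          have cc : Continuous fun y =>
              Complex.I * lam * θ y + κ * deriv q y + η * deriv w y - f₃ y := by
            have c1 := hθ.continuous
            have c2 : Continuous (deriv q) := hq.continuous_deriv (by simp)
            have c3 : Continuous (deriv w) := hw.continuous_deriv (by simp)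
            have c4 := hf₃.continuous
            fun_prop
          have hE : Set.EqOn (fun y =>
              Complex.I * lam * θ y + κ * deriv q y + η * deriv w y - f₃ y) (fun _ => 0)
              (Ioo 0 L) := by
            intro y hy
            have e3 := (heq y hy).2.2.1
            have e3' : deriv (fun y => (κ : ℂ) * q y + (η : ℂ) * w y) y
                = (κ : ℂ) * deriv q y + (η : ℂ) * deriv w y :=
              (((dq y).const_mul _).add ((dw y).const_mul _)).deriv
            rw [e3'] at e3
            simp only
            rw [← e3]; ring
          intro y hy
          rw [hcl] at hy
          exact hE.closure cc continuous_const hy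
        intro y hy
        rw [(hd y).hasDerivWithinAt.derivWithin
          (uniqueDiffOn_Icc hL y ⟨hy.1, hy.2.le⟩)]
        exact hz y ⟨hy.1, hy.2.le⟩) x hx
    simpa [hq0, hw0] using this
  have hG : ∀ x, HasDerivAt (fun x => κ * inner ℝ (θ x) (∫ y in (0:ℝ)..x, θ y))
      (κ * (inner ℝ (θ x) (θ x) + inner ℝ (deriv θ x) (∫ y in (0:ℝ)..x, θ y))) x := fun x =>
    ((dθ x).inner ℝ (dΦ x)).const_mul κ
  have c1 := hθ.continuous
  have c2 : Continuous (deriv θ) := hθ.continuous_deriv (by simp)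
  have hI := intervalIntegral.integral_eq_sub_of_hasDerivAt (a := 0) (b := L) (fun x _ => hG x)
    (Continuous.intervalIntegrable
      (((c1.inner (𝕜 := ℝ) c1).add (c2.inner (𝕜 := ℝ) cΦ)).const_mul κ) _ _)
  simp only [hmean, intervalIntegral.integral_same, inner_zero_right, mul_zero, sub_zero] at hI
  refine Eq.trans ?_ hI
  apply intervalIntegral.integral_congr_ae
  have hne : ∀ᵐ x : ℝ, x ≠ L := by
    simp [ae_iff]
  filter_upwards [hne] with x hx3 hx4
  rw [uIoc_of_le hL.le] at hx4
  have e4 := (heq x ⟨hx4.1, lt_of_le_of_ne hx4.2 hx3⟩).2.2.2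
  have e5 := key x ⟨hx4.1.le, hx4.2⟩
  generalize (∫ y in (0:ℝ)..x, θ y) = Φ at *
  generalize (∫ y in (0:ℝ)..x, f₃ y) = P at *
  generalize deriv θ x = θ1 at *
  have e4r := congrArg Complex.re e4
  have e4i := congrArg Complex.im e4
  have e5r := congrArg Complex.re e5
  have e5i := congrArg Complex.im e5
  simp only [Complex.add_re, Complex.sub_re, Complex.mul_re, Complex.add_im, Complex.sub_im,
    Complex.mul_im, Complex.I_re, Complex.I_im, Complex.ofReal_re, Complex.ofReal_im,
    Complex.zero_re, Complex.zero_im] at e4r e4i e5r e5i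
  simp only [Complex.inner, Complex.mul_re, Complex.conj_re, Complex.conj_im, Complex.sq_norm,
    Complex.normSq_apply]
  linear_combination (-Φ.re) * e4r - Φ.im * e4i - τ * (q x).re * e5r - τ * (q x).im * e5i

theorem resolvent_estimate_theta
    (L η β κ τ : ℝ) (hL : 0 < L) (hη : 0 < η) (hβ : 0 < β) (hκ : 0 < κ) (hτ : 0 < τ)
    (m δ p : ℝ → ℝ)
    (hmLip : ∃ K, LipschitzOnWith K m (Icc 0 L))
    (hδLip : ∃ K, LipschitzOnWith K δ (Icc 0 L))
    (hpLip : ∃ K, LipschitzOnWith K p (Icc 0 L))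
    (hmpos : ∀ x ∈ Icc (0 : ℝ) L, 0 < m x)
    (hδpos : ∀ x ∈ Icc (0 : ℝ) L, 0 < δ x)
    (hppos : ∀ x ∈ Icc (0 : ℝ) L, 0 < p x)
    :
    ∃ C > (0 : ℝ),
      ∀ (lam : ℝ) (f₁ f₂ f₃ f₄ u w θ q : ℝ → ℂ),
        ResolventSol L η β κ τ m δ p lam f₁ f₂ f₃ f₄ u w θ q →
          (∫ x in (0 : ℝ)..L, θ x) = 0 →
            (∫ x in (0 : ℝ)..L, ‖θ x‖ ^ 2)
              ≤ C * Real.sqrt (normFsq L τ m p f₁ f₂ f₃ f₄)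
                * Real.sqrt (normUsq L τ m p u w θ q) := by
  obtain ⟨d0, hd0, hd0le⟩ : ∃ d0 > 0, ∀ x ∈ Icc (0:ℝ) L, d0 ≤ δ x := by
    obtain ⟨K, hK⟩ := hδLip
    obtain ⟨x0, hx0, hmin⟩ := isCompact_Icc.exists_isMinOn (nonempty_Icc.2 hL.le) hK.continuousOn
    exact ⟨δ x0, hδpos x0 hx0, fun x hx => hmin hx⟩
  obtain ⟨s, hs, hsdef⟩ : ∃ s > 0, β * s * L ^ 2 = κ :=
    ⟨κ / (β * L ^ 2), by positivity, by field_simp⟩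
  obtain ⟨K1, hK1, hK1d⟩ : ∃ K1 > 0, K1 = β * s⁻¹ / 2 + τ * κ + τ * η / 2 :=
    ⟨_, by positivity, rfl⟩
  obtain ⟨K2, hK2, hK2d⟩ : ∃ K2 > 0, K2 = τ * η * L ^ 2 / (2 * d0) :=
    ⟨_, by positivity, rfl⟩
  obtain ⟨C, hC, hCd⟩ :
      ∃ C > 0, C = (2 / κ) * ((1 + τ * L ^ 2) / 2 + K1 / (2 * β) + K2 / 4) :=
    ⟨_, by positivity, rfl⟩
  refine ⟨2 * C, by positivity, ?_⟩
  intro lam f₁ f₂ f₃ f₄ u w θ q h hmean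
  have hdiss := aux_diss L η β κ τ hL hτ m δ p hmLip hδLip hpLip hmpos hppos lam
    f₁ f₂ f₃ f₄ u w θ q h
  have hth := aux_theta L η β κ τ hL m δ p lam f₁ f₂ f₃ f₄ u w θ q h hmean
  obtain ⟨hu, hw, hθ, hq, hf₁, hf₂, hf₃, hf₄, -, -, -, hw0, -⟩ := h
  have nn : ∀ g : ℝ → ℂ, 0 ≤ ∫ x in (0:ℝ)..L, ‖g x‖ ^ 2 := fun g =>
    intervalIntegral.integral_nonneg hL.le (fun x _ => by positivity)
  have nnm : ∀ g : ℝ → ℂ, 0 ≤ ∫ x in (0:ℝ)..L, m x * ‖g x‖ ^ 2 := fun g =>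
    intervalIntegral.integral_nonneg hL.le
      (fun x hx => mul_nonneg (hmpos x hx).le (by positivity))
  have nnp : ∀ g : ℝ → ℂ, 0 ≤ ∫ x in (0:ℝ)..L, p x * ‖g x‖ ^ 2 := fun g =>
    intervalIntegral.integral_nonneg hL.le
      (fun x hx => mul_nonneg (hppos x hx).le (by positivity))
  have nτ : ∀ g : ℝ → ℂ, 0 ≤ τ * ∫ x in (0:ℝ)..L, ‖g x‖ ^ 2 := fun g =>
    mul_nonneg hτ.le (nn g)
  have F3 : (∫ x in (0:ℝ)..L, ‖f₃ x‖ ^ 2) ≤ normFsq L τ m p f₁ f₂ f₃ f₄ := by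
    unfold normFsq; linarith [nnp (deriv f₁), nnm f₂, nn f₃, nτ f₄]
  have F34 : τ * (∫ x in (0:ℝ)..L, ‖f₄ x‖ ^ 2) ≤ normFsq L τ m p f₁ f₂ f₃ f₄ := by
    unfold normFsq; linarith [nnp (deriv f₁), nnm f₂, nn f₃, nτ f₄]
  have U3 : (∫ x in (0:ℝ)..L, ‖θ x‖ ^ 2) ≤ normUsq L τ m p u w θ q := by
    unfold normUsq; linarith [nnp (deriv u), nnm w, nn θ, nτ q]
  have U4 : τ * (∫ x in (0:ℝ)..L, ‖q x‖ ^ 2) ≤ normUsq L τ m p u w θ q := by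
    unfold normUsq; linarith [nnp (deriv u), nnm w, nn θ, nτ q]
  have hF0 : 0 ≤ normFsq L τ m p f₁ f₂ f₃ f₄ := (nn f₃).trans F3
  have hU0 : 0 ≤ normUsq L τ m p u w θ q := (nn θ).trans U3
  have cw : Continuous (deriv w) := hw.continuous_deriv (by simp)
  have hPhi := aux_poincare L hL θ hθ.continuous
  have hP := aux_poincare L hL f₃ hf₃.continuous
  have hW := aux_poincare L hL (deriv w) cw
  have hwint : ∀ x, ∫ y in (0:ℝ)..x, deriv w y = w x := by
    intro x
    rw [intervalIntegral.integral_deriv_eq_sub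
      (fun y _ => hw.differentiable (by simp) y) (cw.intervalIntegrable _ _), hw0, sub_zero]
  simp only [hwint] at hW
  have cPhi : Continuous (fun x => ∫ y in (0:ℝ)..x, θ y) :=
    intervalIntegral.continuous_primitive (fun a b => hθ.continuous.intervalIntegrable a b) 0
  have cP : Continuous (fun x => ∫ y in (0:ℝ)..x, f₃ y) :=
    intervalIntegral.continuous_primitive (fun a b => hf₃.continuous.intervalIntegrable a b) 0
  have hW1 : d0 * (∫ x in (0:ℝ)..L, ‖deriv w x‖ ^ 2)
      ≤ ∫ x in (0:ℝ)..L, δ x * ‖deriv w x‖ ^ 2 := by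
    rw [← intervalIntegral.integral_const_mul]
    obtain ⟨K, hK⟩ := hδLip
    apply intervalIntegral.integral_mono_on hL.le
    · exact ((cw.norm.pow 2).const_mul d0).intervalIntegrable _ _
    · exact (hK.continuousOn.fun_mul (cw.norm.pow 2).continuousOn).intervalIntegrable_of_Icc hL.le
    · intro x hx
      exact mul_le_mul_of_nonneg_right (hd0le x hx) (by positivity)
  refine aux_sqrt_opt _ _ _ C hC hF0 hU0 ?_
  intro t ht
  have hdt := hdiss t ht
  generalize hΦd : (fun x => ∫ y in (0:ℝ)..x, θ y) = Φ at *
  generalize hPd : (fun x => ∫ y in (0:ℝ)..x, f₃ y) = P at *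
  have hΦx : ∀ x, ∫ y in (0:ℝ)..x, θ y = Φ x := fun x => congrFun hΦd x
  have hPx : ∀ x, ∫ y in (0:ℝ)..x, f₃ y = P x := fun x => congrFun hPd x
  simp only [hΦx] at hPhi hth
  simp only [hPx] at hP hth
  have sq2 : ∀ {g : ℝ → ℂ}, Continuous g → IntervalIntegrable (fun x => ‖g x‖ ^ 2) volume 0 L :=
    fun hg => (hg.norm.pow 2).intervalIntegrable _ _
  have iq := sq2 hq.continuous
  have iw := sq2 hw.continuous
  have iθ := sq2 hθ.continuous
  have i4 := sq2 hf₄.continuous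
  have iΦ := sq2 cPhi
  have iP := sq2 cP
  have J1 := iθ.const_mul κ
  have J2 := i4.const_mul (τ * t / 2)
  have J3 := iΦ.const_mul (τ * t⁻¹ / 2 + β * s / 2)
  have J4 := iP.const_mul (τ * t / 2)
  have J5 := iq.const_mul (β * s⁻¹ / 2 + τ * t⁻¹ / 2 + τ * κ + τ * η / 2)
  have J6 := iw.const_mul (τ * η / 2)
  have hle : ∫ x in (0:ℝ)..L, (κ * ‖θ x‖ ^ 2 - (τ * t / 2 * ‖f₄ x‖ ^ 2
      + (τ * t⁻¹ / 2 + β * s / 2) * ‖Φ x‖ ^ 2 + τ * t / 2 * ‖P x‖ ^ 2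
      + (β * s⁻¹ / 2 + τ * t⁻¹ / 2 + τ * κ + τ * η / 2) * ‖q x‖ ^ 2
      + τ * η / 2 * ‖w x‖ ^ 2)) ≤ 0 := by
    refine le_trans ?_ hth.le
    apply intervalIntegral.integral_mono_on hL.le
      (J1.sub ((((J2.add J3).add J4).add J5).add J6))
    · apply Continuous.intervalIntegrable
      have g1 := hf₄.continuous.inner (𝕜 := ℝ) cPhi
      have g2 := hq.continuous.inner (𝕜 := ℝ) cPhi
      have g3 := cP.inner (𝕜 := ℝ) hq.continuous
      have g4 := hq.continuous.inner (𝕜 := ℝ) hw.continuous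
      have g5 := hq.continuous
      have g6 := hθ.continuous
      fun_prop
    · intro x _
      have y1 := (neg_le_abs _).trans (aux_young (f₄ x) (Φ x) t ht)
      have y2 := (le_abs_self _).trans (aux_young (q x) (Φ x) s⁻¹ (by positivity))
      have y3 := (neg_le_abs _).trans (aux_young (P x) (q x) t ht)
      have y4 := (le_abs_self _).trans (aux_young (q x) (w x) 1 one_pos)
      rw [inv_inv] at y2
      rw [inv_one] at y4
      have z1 := mul_le_mul_of_nonneg_left y1 hτ.le
      have z2 := mul_le_mul_of_nonneg_left y2 hβ.le
      have z3 := mul_le_mul_of_nonneg_left y3 hτ.le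
      have z4 := mul_le_mul_of_nonneg_left y4 (mul_pos hτ hη).le
      linarith
  rw [intervalIntegral.integral_sub J1 ((((J2.add J3).add J4).add J5).add J6),
    intervalIntegral.integral_add (((J2.add J3).add J4).add J5) J6,
    intervalIntegral.integral_add ((J2.add J3).add J4) J5,
    intervalIntegral.integral_add (J2.add J3) J4,
    intervalIntegral.integral_add J2 J3] at hle
  simp only [intervalIntegral.integral_const_mul] at hle
  have nDd : 0 ≤ ∫ x in (0:ℝ)..L, δ x * ‖deriv w x‖ ^ 2 :=
    (mul_nonneg hd0.le (nn (deriv w))).trans hW1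
  have nQ := nn q
  have nΘ := nn θ
  clear hth hdiss
  generalize (∫ x in (0:ℝ)..L, ‖θ x‖ ^ 2) = Θ at *
  generalize (∫ x in (0:ℝ)..L, ‖f₄ x‖ ^ 2) = F4 at *
  generalize (∫ x in (0:ℝ)..L, ‖f₃ x‖ ^ 2) = G3 at *
  generalize (∫ x in (0:ℝ)..L, ‖Φ x‖ ^ 2) = P1 at *
  generalize (∫ x in (0:ℝ)..L, ‖P x‖ ^ 2) = P2 at *
  generalize (∫ x in (0:ℝ)..L, ‖q x‖ ^ 2) = Q at *
  generalize (∫ x in (0:ℝ)..L, ‖w x‖ ^ 2) = W at *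
  generalize (∫ x in (0:ℝ)..L, ‖deriv w x‖ ^ 2) = W1 at *
  generalize (∫ x in (0:ℝ)..L, δ x * ‖deriv w x‖ ^ 2) = Dd at *
  generalize normFsq L τ m p f₁ f₂ f₃ f₄ = F at *
  generalize normUsq L τ m p u w θ q = U at *
  have ht' : 0 < t⁻¹ := inv_pos.2 ht
  generalize t⁻¹ = r at *
  generalize s⁻¹ = s' at *
  have v1 : τ * t / 2 * F4 ≤ t / 2 * F := by nlinarith
  have v2 : τ * r / 2 * P1 ≤ τ * L ^ 2 / 2 * (r * U) := by
    have : P1 ≤ L ^ 2 * U := hPhi.trans (by gcongr)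
    calc τ * r / 2 * P1 ≤ τ * r / 2 * (L ^ 2 * U) := by gcongr
      _ = _ := by ring
  have v3 : β * s / 2 * P1 ≤ κ / 2 * Θ := by
    calc β * s / 2 * P1 ≤ β * s / 2 * (L ^ 2 * Θ) := by gcongr
      _ = (β * s * L ^ 2) / 2 * Θ := by ring
      _ = _ := by rw [hsdef]
  have v4 : τ * t / 2 * P2 ≤ τ * L ^ 2 / 2 * (t * F) := by
    have : P2 ≤ L ^ 2 * F := hP.trans (by gcongr)
    calc τ * t / 2 * P2 ≤ τ * t / 2 * (L ^ 2 * F) := by gcongr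
      _ = _ := by ring
  have v5 : τ * r / 2 * Q ≤ r / 2 * U := by nlinarith
  have v6 : τ * η / 2 * W ≤ K2 * Dd := by
    calc τ * η / 2 * W ≤ τ * η / 2 * (L ^ 2 * W1) := by gcongr
      _ = K2 * (d0 * W1) := by rw [hK2d]; field_simp
      _ ≤ _ := by gcongr
  have v7 : K1 * Q ≤ K1 / (2 * β) * (t * F + r * U) := by
    calc K1 * Q = K1 / β * (β * Q) := by field_simp
      _ ≤ K1 / β * ((t * F + r * U) / 2) := by gcongr; linarith
      _ = _ := by field_simp
  have v8 : K2 * Dd ≤ K2 / 4 * (t * F + r * U) := by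
    have : 0 ≤ β * Q := by positivity
    calc K2 * Dd ≤ K2 * ((t * F + r * U) / 4) := by gcongr; linarith
      _ = _ := by ring
  have v9 : κ / 2 * Θ ≤ ((1 + τ * L ^ 2) / 2 + K1 / (2 * β) + K2 / 4) * (t * F + r * U) := by
    have : (β * s' / 2 + τ * r / 2 + τ * κ + τ * η / 2) * Q = K1 * Q + τ * r / 2 * Q := by
      rw [hK1d]; ring
    linarith
  calc Θ = 2 / κ * (κ / 2 * Θ) := by field_simp
    _ ≤ 2 / κ * (((1 + τ * L ^ 2) / 2 + K1 / (2 * β) + K2 / 4) * (t * F + r * U)) := by gcongr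
    _ = C * (t * F + r * U) := by rw [hCd]; ring
end
end

section
/- (Uniform resolvent bound on the imaginary axis) There exists a constant C > 0, depending only on L, η, β, κ, τ, m, δ and p, such that for every λ ∈ ℝ, every solution (u, w, θ, q) of the resolvent system with data (f₁, f₂, f₃, f₄) which additionally satisfies ∫₀ᴸ θ(x) dx = 0 obeys ‖U‖ ≤ C ‖F‖. -/
open MeasureTheory Set intervalIntegral Complex

noncomputable section

/-- Squared L² norm on `[0, L]`. -/
def Jsq (L : ℝ) (f : ℝ → ℂ) : ℝ := ∫ x in (0 : ℝ)..L, ‖f x‖ ^ 2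

/-- The real inner product on `ℂ`. -/
def rp (a b : ℂ) : ℝ := a.re * b.re + a.im * b.im

lemma nsq (a : ℂ) : ‖a‖ ^ 2 = a.re * a.re + a.im * a.im := by
  rw [← Complex.normSq_eq_norm_sq, Complex.normSq_apply]

lemma Jsq_nonneg {L : ℝ} (hL : 0 < L) (f : ℝ → ℂ) : 0 ≤ Jsq L f :=
  intervalIntegral.integral_nonneg hL.le (fun _ _ => by positivity)

lemma rp_continuous {a b : ℝ → ℂ} (ha : Continuous a) (hb : Continuous b) :
    Continuous (fun x => rp (a x) (b x)) := by
  unfold rp; fun_prop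

lemma young (c c1 ε : ℝ) (a b : ℂ) (hc : |c| ≤ c1) (hε : 0 < ε) :
    c * rp a b ≤ c1 * (ε * ‖a‖ ^ 2 + ε⁻¹ * ‖b‖ ^ 2) := by
  have h1 : |rp a b| ≤ ε * ‖a‖ ^ 2 + ε⁻¹ * ‖b‖ ^ 2 := by
    have hn : |rp a b| ≤ ‖a‖ * ‖b‖ := by
      have : rp a b = (a * (starRingEnd ℂ) b).re := by simp [rp]
      rw [this]
      refine (Complex.abs_re_le_norm _).trans ?_
      simp
    have h2 : ε * ‖a‖ ^ 2 + ε⁻¹ * ‖b‖ ^ 2 - ‖a‖ * ‖b‖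
        = ε⁻¹ * ((ε * ‖a‖ - ‖b‖ / 2) ^ 2 + 3 / 4 * ‖b‖ ^ 2) := by
      field_simp; ring
    have : 0 ≤ ε⁻¹ * ((ε * ‖a‖ - ‖b‖ / 2) ^ 2 + 3 / 4 * ‖b‖ ^ 2) := by positivity
    linarith
  calc c * rp a b ≤ |c * rp a b| := le_abs_self _
    _ = |c| * |rp a b| := abs_mul _ _
    _ ≤ _ := mul_le_mul hc h1 (abs_nonneg _) ((abs_nonneg c).trans hc)

lemma comb {L : ℝ} (hL : 0 < L) {n : ℕ} (c : Fin n → ℝ) (g : Fin n → ℝ → ℂ) (Z : ℝ → ℝ)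
    (hg : ∀ i, Continuous (g i)) (hZ : Continuous Z) (hZ0 : ∫ x in (0 : ℝ)..L, Z x = 0)
    (h : ∀ x ∈ Icc 0 L, 0 ≤ (∑ i, c i * ‖g i x‖ ^ 2) + Z x) :
    0 ≤ ∑ i, c i * Jsq L (g i) := by
  have h1 : 0 ≤ ∫ x in (0 : ℝ)..L, ((∑ i, c i * ‖g i x‖ ^ 2) + Z x) :=
    intervalIntegral.integral_nonneg hL.le h
  have hi : ∀ i, Continuous (fun x => c i * ‖g i x‖ ^ 2) := fun i => by
    have := hg i; fun_prop
  rw [intervalIntegral.integral_add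
      ((continuous_finsetSum _ (fun i _ => hi i)).intervalIntegrable _ _)
      (hZ.intervalIntegrable _ _), hZ0, add_zero,
    intervalIntegral.integral_finsetSum (fun i _ => (hi i).intervalIntegrable _ _)] at h1
  simpa [Jsq] using h1

lemma zero_comb {L c : ℝ} {a b : ℝ → ℝ} (ha : Continuous a) (hb : Continuous b)
    (ia : ∫ x in (0 : ℝ)..L, a x = 0) (ib : ∫ x in (0 : ℝ)..L, b x = 0) :
    ∫ x in (0 : ℝ)..L, (a x + c * b x) = 0 := by
  rw [intervalIntegral.integral_add (ha.intervalIntegrable _ _)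
    (Continuous.intervalIntegrable (by fun_prop) _ _), intervalIntegral.integral_const_mul, ia, ib]
  simp

lemma rp_hasDerivAt {a b : ℝ → ℂ} {a' b' : ℂ} {x : ℝ} (ha : HasDerivAt a a' x)
    (hb : HasDerivAt b b' x) :
    HasDerivAt (fun y => rp (a y) (b y)) (rp a' (b x) + rp (a x) b') x := by
  have h1 := Complex.reCLM.hasFDerivAt.comp_hasDerivAt x ha
  have h2 := Complex.imCLM.hasFDerivAt.comp_hasDerivAt x ha
  have h3 := Complex.reCLM.hasFDerivAt.comp_hasDerivAt x hb
  have h4 := Complex.imCLM.hasFDerivAt.comp_hasDerivAt x hb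
  have := (h1.mul h3).add (h2.mul h4)
  simp only [Function.comp_def, Complex.reCLM_apply, Complex.imCLM_apply] at this
  refine this.congr_deriv ?_
  unfold rp; ring

lemma parts {L : ℝ} {a b a' b' : ℝ → ℂ} (ha : ∀ x, HasDerivAt a (a' x) x)
    (hb : ∀ x, HasDerivAt b (b' x) x) (ha' : Continuous a') (hb' : Continuous b')
    (h0 : a 0 = 0) (h1 : a L = 0) :
    ∫ x in (0 : ℝ)..L, (rp (a' x) (b x) + rp (a x) (b' x)) = 0 := by
  have hca : Continuous a := continuous_iff_continuousAt.2 fun x => (ha x).continuousAt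
  have hcb : Continuous b := continuous_iff_continuousAt.2 fun x => (hb x).continuousAt
  rw [intervalIntegral.integral_eq_sub_of_hasDerivAt
    (f := fun y => rp (a y) (b y)) (fun x _ => rp_hasDerivAt (ha x) (hb x))
    (((rp_continuous ha' hcb).add (rp_continuous hca hb')).intervalIntegrable _ _)]
  simp [rp, h0, h1]

lemma poincare {L : ℝ} (hL : 0 < L) {a a' : ℝ → ℂ} (ha : ∀ x, HasDerivAt a (a' x) x)
    (ha' : Continuous a') (h0 : a 0 = 0) : Jsq L a ≤ L ^ 2 * Jsq L a' := by
  have hn : Continuous fun x => ‖a' x‖ := by fun_prop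
  set I := ∫ x in (0 : ℝ)..L, ‖a' x‖ with hI
  have hI2 : I ^ 2 ≤ L * Jsq L a' := by
    have h : 0 ≤ ∫ x in (0 : ℝ)..L, (L * ‖a' x‖ - I) ^ 2 :=
      intervalIntegral.integral_nonneg hL.le (fun _ _ => by positivity)
    have e : ∀ x, (L * ‖a' x‖ - I) ^ 2
        = L ^ 2 * ‖a' x‖ ^ 2 - 2 * L * I * ‖a' x‖ + I ^ 2 := fun x => by ring
    simp_rw [e] at h
    rw [intervalIntegral.integral_add, intervalIntegral.integral_sub,
      intervalIntegral.integral_const_mul, intervalIntegral.integral_const_mul,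
      intervalIntegral.integral_const, ← hI] at h
    · simp only [sub_zero, smul_eq_mul] at h
      have h' : 0 ≤ L * (L * Jsq L a' - I ^ 2) := by unfold Jsq; nlinarith
      have := nonneg_of_mul_nonneg_right h' hL
      linarith
    all_goals exact Continuous.intervalIntegrable (by fun_prop) _ _
  have hb : ∀ x ∈ Icc 0 L, ‖a x‖ ^ 2 ≤ L * Jsq L a' := by
    intro x hx
    have h1 : a x = ∫ y in (0 : ℝ)..x, a' y := by
      rw [intervalIntegral.integral_eq_sub_of_hasDerivAt (fun y _ => ha y)
        (ha'.intervalIntegrable _ _), h0, sub_zero]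
    have h2 : ‖a x‖ ≤ I := by
      rw [h1]
      refine (intervalIntegral.norm_integral_le_integral_norm hx.1).trans ?_
      exact intervalIntegral.integral_mono_interval le_rfl hx.1 hx.2
        (Filter.Eventually.of_forall fun _ => norm_nonneg _) (hn.intervalIntegrable _ _)
    exact (pow_le_pow_left₀ (norm_nonneg _) h2 2).trans hI2
  have hca : Continuous a := continuous_iff_continuousAt.2 fun x => (ha x).continuousAt
  have := intervalIntegral.integral_mono_on (f := fun x => ‖a x‖ ^ 2)
    (g := fun _ => L * Jsq L a') (μ := volume) hL.le
    (Continuous.intervalIntegrable (by fun_prop) _ _)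
    (Continuous.intervalIntegrable (by fun_prop) _ _) hb
  rw [intervalIntegral.integral_const] at this
  simp only [sub_zero, smul_eq_mul] at this
  unfold Jsq at *
  nlinarith

/-- The integrand of the weak form of the momentum equation. -/
def wk (η lam : ℝ) (M D P : ℝ → ℝ) (f₂ u' w w' θ' φ φ' : ℝ → ℂ) (x : ℝ) : ℝ :=
  rp (Complex.I * (lam : ℂ) * (M x : ℂ) * w x + (η : ℂ) * θ' x - (M x : ℂ) * f₂ x) (φ x)
    + rp ((P x : ℂ) * u' x + 2 * (D x : ℂ) * w' x) (φ' x)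

lemma wk_continuous (η lam : ℝ) {M D P : ℝ → ℝ} {f₂ u' w w' θ' φ φ' : ℝ → ℂ}
    (hM : Continuous M) (hD : Continuous D) (hP : Continuous P) (hf₂ : Continuous f₂)
    (hu' : Continuous u') (hw : Continuous w) (hw' : Continuous w') (hθ' : Continuous θ')
    (hφ : Continuous φ) (hφ' : Continuous φ') :
    Continuous (wk η lam M D P f₂ u' w w' θ' φ φ') := by
  unfold wk
  exact (rp_continuous (by fun_prop) hφ).add (rp_continuous (by fun_prop) hφ')

lemma est1 {L η β κ τ lam d0 p1 m1 ε : ℝ} (hL : 0 < L) (hτ : 0 < τ) (hε : 0 < ε)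
    {M D P : ℝ → ℝ} {f₁' f₂ f₃ f₄ u' w w' θ θ' q q' : ℝ → ℂ}
    (hM : Continuous M) (hD : Continuous D) (hP : Continuous P)
    (hd0 : ∀ x, d0 ≤ D x) (hP0 : ∀ x, 0 ≤ P x) (hp1 : ∀ x, P x ≤ p1)
    (hM0 : ∀ x, 0 ≤ M x) (hm1 : ∀ x, M x ≤ m1)
    (hf₁' : Continuous f₁') (hf₂ : Continuous f₂) (hf₃ : Continuous f₃) (hf₄ : Continuous f₄)
    (hu' : Continuous u') (hw' : Continuous w') (hθ' : Continuous θ') (hq' : Continuous q')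
    (hw : ∀ x, HasDerivAt w (w' x) x) (hθ : ∀ x, HasDerivAt θ (θ' x) x)
    (hq : ∀ x, HasDerivAt q (q' x) x)
    (w0 : w 0 = 0) (wL : w L = 0) (q0 : q 0 = 0) (qL : q L = 0)
    (e1 : ∀ x ∈ Icc 0 L, Complex.I * (lam : ℂ) * u' x - w' x = f₁' x)
    (e3 : ∀ x ∈ Icc 0 L, Complex.I * (lam : ℂ) * θ x + (κ * q' x + η * w' x) = f₃ x)
    (e4 : ∀ x ∈ Icc 0 L,
      Complex.I * (lam : ℂ) * (τ : ℂ) * q x + (κ : ℂ) * θ' x + (β : ℂ) * q x = (τ : ℂ) * f₄ x)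
    (e2 : ∫ x in (0 : ℝ)..L, wk η lam M D P f₂ u' w w' θ' w w' x = 0) :
    2 * d0 * Jsq L w' + β * Jsq L q ≤ p1 * (ε * Jsq L u' + ε⁻¹ * Jsq L f₁')
      + m1 * (ε * Jsq L w + ε⁻¹ * Jsq L f₂) + (ε * Jsq L θ + ε⁻¹ * Jsq L f₃)
      + τ * (ε * Jsq L q + ε⁻¹ * Jsq L f₄) := by
  have hcw : Continuous w := continuous_iff_continuousAt.2 fun x => (hw x).continuousAt
  have hcθ : Continuous θ := continuous_iff_continuousAt.2 fun x => (hθ x).continuousAt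
  have hcq : Continuous q := continuous_iff_continuousAt.2 fun x => (hq x).continuousAt
  have c1 := wk_continuous η lam hM hD hP hf₂ hu' hcw hw' hθ' hcw hw'
  have c2 := (rp_continuous hw' hcθ).add (rp_continuous hcw hθ')
  have c3 := (rp_continuous hq' hcθ).add (rp_continuous hcq hθ')
  have i2 := parts hw hθ hw' hθ' w0 wL
  have i3 := parts hq hθ hq' hθ' q0 qL
  have key := comb hL
    ![-(2 * d0), -β, p1 * ε, p1 * ε⁻¹, m1 * ε, m1 * ε⁻¹, ε, ε⁻¹, τ * ε, τ * ε⁻¹]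
    ![w', q, u', f₁', w, f₂, θ, f₃, q, f₄]
    (fun x => wk η lam M D P f₂ u' w w' θ' w w' x
      + (-η) * (rp (w' x) (θ x) + rp (w x) (θ' x)) + (-κ) * (rp (q' x) (θ x) + rp (q x) (θ' x)))
    (by intro i; fin_cases i <;> assumption)
    ((c1.add (continuous_const.mul c2)).add (continuous_const.mul c3))
    (zero_comb (c1.add (continuous_const.mul c2)) c3 (zero_comb c1 c2 e2 i2) i3)
    (by
      intro x hx
      have y1 := young (P x) p1 ε (u' x) (f₁' x) (by rw [abs_of_nonneg (hP0 x)]; exact hp1 x) hε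
      have y2 := young (M x) m1 ε (w x) (f₂ x) (by rw [abs_of_nonneg (hM0 x)]; exact hm1 x) hε
      have y3 := young 1 1 ε (θ x) (f₃ x) (by simp) hε
      have y4 := young τ τ ε (q x) (f₄ x) (by rw [abs_of_pos hτ]) hε
      have y5 : d0 * ‖w' x‖ ^ 2 ≤ D x * ‖w' x‖ ^ 2 := by gcongr; exact hd0 x
      have id : P x * rp (u' x) (f₁' x) + M x * rp (w x) (f₂ x) + rp (θ x) (f₃ x)
          + rp (q x) (τ * f₄ x)
          = 2 * (D x * ‖w' x‖ ^ 2) + β * ‖q x‖ ^ 2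
            - (wk η lam M D P f₂ u' w w' θ' w w' x
      + (-η) * (rp (w' x) (θ x) + rp (w x) (θ' x)) + (-κ) * (rp (q' x) (θ x) + rp (q x) (θ' x))) := by
        rw [← e1 x hx, ← e3 x hx, ← e4 x hx, nsq, nsq]
        simp [wk, rp]
        ring
      have t4 : rp (q x) (τ * f₄ x) = τ * rp (q x) (f₄ x) := by simp [rp]; ring
      simp [Fin.sum_univ_succ]
      linarith)
  simp [Fin.sum_univ_succ] at key
  linarith

lemma est4 {L η lam p0 d1 m1 ε : ℝ} (hL : 0 < L) (hη : 0 < η) (hε : 0 < ε)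
    {M D P : ℝ → ℝ} {f₁ f₂ u u' w w' θ θ' : ℝ → ℂ}
    (hM : Continuous M) (hD : Continuous D) (hP : Continuous P)
    (hD0 : ∀ x, 0 ≤ D x) (hd1 : ∀ x, D x ≤ d1) (hp0 : ∀ x, p0 ≤ P x)
    (hM0 : ∀ x, 0 ≤ M x) (hm1 : ∀ x, M x ≤ m1)
    (hf₁ : Continuous f₁) (hf₂ : Continuous f₂)
    (hu' : Continuous u') (hw' : Continuous w') (hθ' : Continuous θ')
    (hu : ∀ x, HasDerivAt u (u' x) x)
    (hcw : Continuous w) (hθ : ∀ x, HasDerivAt θ (θ' x) x)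
    (u0 : u 0 = 0) (uL : u L = 0)
    (e1 : ∀ x ∈ Icc 0 L, Complex.I * (lam : ℂ) * u x - w x = f₁ x)
    (e2 : ∫ x in (0 : ℝ)..L, wk η lam M D P f₂ u' w w' θ' u u' x = 0) :
    p0 * Jsq L u' ≤ η * (ε * Jsq L u' + ε⁻¹ * Jsq L θ) + m1 * Jsq L w
      + m1 * (Jsq L w + Jsq L f₁) + 2 * d1 * (ε * Jsq L u' + ε⁻¹ * Jsq L w')
      + m1 * (ε * Jsq L u + ε⁻¹ * Jsq L f₂) := by
  have hcu : Continuous u := continuous_iff_continuousAt.2 fun x => (hu x).continuousAt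
  have hcθ : Continuous θ := continuous_iff_continuousAt.2 fun x => (hθ x).continuousAt
  have c1 := wk_continuous η lam hM hD hP hf₂ hu' hcw hw' hθ' hcu hu'
  have c2 := (rp_continuous hu' hcθ).add (rp_continuous hcu hθ')
  have i2 := parts hu hθ hu' hθ' u0 uL
  have key := comb hL
    ![-p0, η * ε, η * ε⁻¹, m1, m1, m1, 2 * d1 * ε, 2 * d1 * ε⁻¹, m1 * ε, m1 * ε⁻¹]
    ![u', u', θ, w, w, f₁, u', w', u, f₂]
    (fun x => wk η lam M D P f₂ u' w w' θ' u u' x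
      + (-η) * (rp (u' x) (θ x) + rp (u x) (θ' x)))
    (by intro i; fin_cases i <;> assumption)
    (c1.add (continuous_const.mul c2))
    (zero_comb c1 c2 e2 i2)
    (by
      intro x hx
      have y1 := young η η ε (u' x) (θ x) (by rw [abs_of_pos hη]) hε
      have y2 := young (M x) m1 1 (w x) (f₁ x) (by rw [abs_of_nonneg (hM0 x)]; exact hm1 x) one_pos
      have y3 := young (-(2 * D x)) (2 * d1) ε (u' x) (w' x)
        (by rw [abs_neg, abs_of_nonneg (by linarith [hD0 x])]; linarith [hd1 x]) hε
      have y4 := young (M x) m1 ε (u x) (f₂ x) (by rw [abs_of_nonneg (hM0 x)]; exact hm1 x) hε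
      have y5 : p0 * ‖u' x‖ ^ 2 ≤ P x * ‖u' x‖ ^ 2 := by gcongr; exact hp0 x
      have y6 : M x * ‖w x‖ ^ 2 ≤ m1 * ‖w x‖ ^ 2 := by gcongr; exact hm1 x
      have id : P x * ‖u' x‖ ^ 2 = (wk η lam M D P f₂ u' w w' θ' u u' x
            + (-η) * (rp (u' x) (θ x) + rp (u x) (θ' x)))
          + η * rp (u' x) (θ x) + M x * ‖w x‖ ^ 2 + M x * rp (w x) (f₁ x)
          + (-(2 * D x)) * rp (u' x) (w' x) + M x * rp (u x) (f₂ x) := by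
        rw [← e1 x hx, nsq, nsq]
        simp [wk, rp]
        ring
      simp [Fin.sum_univ_succ]
      simp at y2
      linarith)
  simp [Fin.sum_univ_succ] at key
  linarith

lemma est3 {L η β κ τ lam ε : ℝ} (hL : 0 < L) (hη : 0 < η) (hβ : 0 < β) (hτ : 0 < τ)
    (hε : 0 < ε)
    {f₃ f₄ w w' θ θ' q q' : ℝ → ℂ}
    (hf₃ : Continuous f₃) (hf₄ : Continuous f₄)
    (hw' : Continuous w') (hθ' : Continuous θ') (hq' : Continuous q')
    (hw : ∀ x, HasDerivAt w (w' x) x) (hθ : ∀ x, HasDerivAt θ (θ' x) x)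
    (hq : ∀ x, HasDerivAt q (q' x) x)
    (w0 : w 0 = 0) (q0 : q 0 = 0) (hmean : ∫ x in (0 : ℝ)..L, θ x = 0)
    (e3 : ∀ x ∈ Icc 0 L, Complex.I * (lam : ℂ) * θ x + (κ * q' x + η * w' x) = f₃ x)
    (e4 : ∀ x ∈ Icc 0 L,
      Complex.I * (lam : ℂ) * (τ : ℂ) * q x + (κ : ℂ) * θ' x + (β : ℂ) * q x
        = (τ : ℂ) * f₄ x) :
    κ * Jsq L θ ≤ τ * (ε * (L ^ 2 * Jsq L θ) + ε⁻¹ * Jsq L f₄)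
      + β * (ε * (L ^ 2 * Jsq L θ) + ε⁻¹ * Jsq L q)
      + τ * (Jsq L q + L ^ 2 * Jsq L f₃) + τ * κ * Jsq L q + τ * η * (Jsq L q + Jsq L w) := by
  have hcw : Continuous w := continuous_iff_continuousAt.2 fun x => (hw x).continuousAt
  have hcθ : Continuous θ := continuous_iff_continuousAt.2 fun x => (hθ x).continuousAt
  have hcq : Continuous q := continuous_iff_continuousAt.2 fun x => (hq x).continuousAt
  obtain ⟨Q, hQdef⟩ : ∃ Q : ℝ → ℂ, Q = fun x => ∫ y in (0 : ℝ)..x, θ y := ⟨_, rfl⟩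
  obtain ⟨Φ, hΦdef⟩ : ∃ Φ : ℝ → ℂ, Φ = fun x => ∫ y in (0 : ℝ)..x, f₃ y := ⟨_, rfl⟩
  have hQ : ∀ x, HasDerivAt Q (θ x) x := fun x => by
    rw [hQdef]; exact hcθ.integral_hasStrictDerivAt 0 x |>.hasDerivAt
  have hΦ : ∀ x, HasDerivAt Φ (f₃ x) x := fun x => by
    rw [hΦdef]; exact hf₃.integral_hasStrictDerivAt 0 x |>.hasDerivAt
  have Q0 : Q 0 = 0 := by simp [hQdef]
  have QL : Q L = 0 := by simp [hQdef, hmean]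
  have Φ0 : Φ 0 = 0 := by simp [hΦdef]
  have hcQ : Continuous Q := continuous_iff_continuousAt.2 fun x => (hQ x).continuousAt
  have hcΦ : Continuous Φ := continuous_iff_continuousAt.2 fun x => (hΦ x).continuousAt
  have eQ : ∀ x ∈ Icc 0 L, Φ x = Complex.I * (lam : ℂ) * Q x + (κ * q x + η * w x) := by
    intro x hx
    have h1 : ∫ y in (0 : ℝ)..x, (Complex.I * (lam : ℂ) * θ y + (κ * q' y + η * w' y))
        = (Complex.I * (lam : ℂ) * Q x + (κ * q x + η * w x))
          - (Complex.I * (lam : ℂ) * Q 0 + (κ * q 0 + η * w 0)) :=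
      intervalIntegral.integral_eq_sub_of_hasDerivAt
        (f := fun y => Complex.I * (lam : ℂ) * Q y + (κ * q y + η * w y))
        (fun y _ => ((hQ y).const_mul _).add (((hq y).const_mul _).add ((hw y).const_mul _)))
        (Continuous.intervalIntegrable (by fun_prop) _ _)
    rw [Q0, q0, w0] at h1
    simp only [mul_zero, add_zero, sub_zero] at h1
    rw [← h1, hΦdef]
    refine intervalIntegral.integral_congr fun y hy => ?_
    rw [uIcc_of_le hx.1] at hy
    exact (e3 y ⟨hy.1, hy.2.trans hx.2⟩).symm
  have pQ := poincare hL hQ hcθ Q0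
  have pΦ := poincare hL hΦ hf₃ Φ0
  have c2 := (rp_continuous hcθ hcθ).add (rp_continuous hcQ hθ')
  have i2 := parts hQ hθ hcθ hθ' Q0 QL
  have key := comb hL
    ![-κ, τ * ε, τ * ε⁻¹, β * ε, β * ε⁻¹, τ, τ, τ * κ, τ * η, τ * η]
    ![θ, Q, f₄, Q, q, q, Φ, q, q, w]
    (fun x => κ * (rp (θ x) (θ x) + rp (Q x) (θ' x)))
    (by intro i; fin_cases i <;> assumption)
    (continuous_const.mul c2)
    (by
      rw [intervalIntegral.integral_const_mul, i2]
      simp)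
    (by
      intro x hx
      have y1 := young (-τ) τ ε (Q x) (f₄ x) (by rw [abs_neg, abs_of_pos hτ]) hε
      have y2 := young β β ε (Q x) (q x) (by rw [abs_of_pos hβ]) hε
      have y3 := young (-τ) τ 1 (q x) (Φ x) (by rw [abs_neg, abs_of_pos hτ]) one_pos
      have y4 := young (τ * η) (τ * η) 1 (q x) (w x)
        (by rw [abs_of_pos (mul_pos hτ hη)]) one_pos
      have t4 : rp (Q x) (τ * f₄ x) = τ * rp (Q x) (f₄ x) := by simp [rp]; ring
      have id : κ * ‖θ x‖ ^ 2 = κ * (rp (θ x) (θ x) + rp (Q x) (θ' x))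
          - rp (Q x) (τ * f₄ x) + β * rp (Q x) (q x) + (-τ) * rp (q x) (Φ x)
          + τ * κ * ‖q x‖ ^ 2 + τ * η * rp (q x) (w x) := by
        rw [← e4 x hx, eQ x hx, nsq, nsq]
        simp [rp]
        ring
      simp [Fin.sum_univ_succ]
      simp at y3 y4
      linarith)
  simp [Fin.sum_univ_succ] at key
  have a1 := mul_le_mul_of_nonneg_left pQ (mul_pos hτ hε).le
  have a2 := mul_le_mul_of_nonneg_left pQ (mul_pos hβ hε).le
  have a3 := mul_le_mul_of_nonneg_left pΦ hτ.le
  linarith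

lemma rp_contDiff {a b : ℝ → ℂ} (ha : ContDiff ℝ 1 a) (hb : ContDiff ℝ 1 b) :
    ContDiff ℝ 1 (fun x => rp (a x) (b x)) := by
  unfold rp
  have h1 := Complex.reCLM.contDiff.comp ha
  have h2 := Complex.imCLM.contDiff.comp ha
  have h3 := Complex.reCLM.contDiff.comp hb
  have h4 := Complex.imCLM.contDiff.comp hb
  exact (h1.mul h3).add (h2.mul h4)

lemma weak {L η lam : ℝ} (hL : 0 < L) {m δ p : ℝ → ℝ}
    (hδLip : ∃ K, LipschitzOnWith K δ (Icc 0 L))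
    (hpLip : ∃ K, LipschitzOnWith K p (Icc 0 L))
    {f₂ u' w w' θ' φ φ' : ℝ → ℂ}
    (hu' : ContDiff ℝ 1 u') (hw' : ContDiff ℝ 1 w') (hφ : ContDiff ℝ 1 φ)
    (hdφ : ∀ x, HasDerivAt φ (φ' x) x) (φ0 : φ 0 = 0) (φL : φ L = 0)
    (e2 : ∀ x ∈ Ioo 0 L, Complex.I * (lam : ℂ) * (m x : ℂ) * w x
        - deriv (fun y => (p y : ℂ) * u' y + 2 * (δ y : ℂ) * w' y) x
        + (η : ℂ) * θ' x = (m x : ℂ) * f₂ x) :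
    ∫ x in (0 : ℝ)..L, wk η lam m δ p f₂ u' w w' θ' φ φ' x = 0 := by
  obtain ⟨K1, hK1⟩ := hδLip
  obtain ⟨K2, hK2⟩ := hpLip
  rw [← uIcc_of_le hL.le] at hK1 hK2
  have aδ := hK1.absolutelyContinuousOnInterval
  have ap := hK2.absolutelyContinuousOnInterval
  have aa := (rp_contDiff hu' hφ).contDiffOn (s := uIcc 0 L) |>.absolutelyContinuousOnInterval
  have ab := (rp_contDiff hw' hφ).contDiffOn (s := uIcc 0 L) |>.absolutelyContinuousOnInterval
  have aR := (ap.fun_mul aa).fun_add ((aδ.fun_mul ab).const_mul 2)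
  have hR := aR.integral_deriv_eq_sub
  have hz : rp (u' L) (φ L) = 0 ∧ rp (w' L) (φ L) = 0 ∧ rp (u' 0) (φ 0) = 0
      ∧ rp (w' 0) (φ 0) = 0 := by simp [rp, φ0, φL]
  simp only [hz.1, hz.2.1, hz.2.2.1, hz.2.2.2, mul_zero, add_zero, sub_zero] at hR
  refine Eq.trans ?_ hR
  apply intervalIntegral.integral_congr_ae
  have hne : ∀ᵐ x : ℝ, x ≠ L := Measure.ae_ne _ _
  filter_upwards [aδ.ae_differentiableAt, ap.ae_differentiableAt, hne] with x h1 h2 h3 hx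
  have hx' : x ∈ Ioo 0 L := by
    rw [uIoc_of_le hL.le] at hx
    exact ⟨hx.1, lt_of_le_of_ne hx.2 h3⟩
  have hxu : x ∈ uIcc 0 L := uIoc_subset_uIcc hx
  have dδ := (h1 hxu).hasDerivAt.ofReal_comp
  have dp := (h2 hxu).hasDerivAt.ofReal_comp
  have du := ((hu'.differentiable one_ne_zero) x).hasDerivAt
  have dw := ((hw'.differentiable one_ne_zero) x).hasDerivAt
  have dσ := ((dp.mul du).add ((dδ.const_mul 2).mul dw)).differentiableAt.hasDerivAt
  have hfun : (fun y => rp ((p y : ℂ) * u' y + 2 * (δ y : ℂ) * w' y) (φ y))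
      = fun y => p y * rp (u' y) (φ y) + 2 * (δ y * rp (w' y) (φ y)) := by
    funext y; simp [rp]; ring
  have hd := rp_hasDerivAt dσ (hdφ x)
  rw [← hfun]
  refine Eq.trans ?_ hd.deriv.symm
  have e := e2 x hx'
  have e' : Complex.I * (lam : ℂ) * (m x : ℂ) * w x + (η : ℂ) * θ' x - (m x : ℂ) * f₂ x
      = deriv (fun y => (p y : ℂ) * u' y + 2 * (δ y : ℂ) * w' y) x := by
    rw [← e]; ring
  unfold wk
  rw [e']
  rfl

lemma ext_bounds {L : ℝ} (hL : 0 < L) {m : ℝ → ℝ} (hm : ∃ K, LipschitzOnWith K m (Icc 0 L))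
    (hpos : ∀ x ∈ Icc 0 L, 0 < m x) :
    ∃ (M : ℝ → ℝ) (m0 m1 : ℝ), Continuous M ∧ EqOn m M (Icc 0 L) ∧ 0 < m0 ∧ 0 < m1 ∧
      (∀ x, m0 ≤ M x) ∧ ∀ x, M x ≤ m1 := by
  obtain ⟨K, hK⟩ := hm
  have hc := hK.continuousOn
  obtain ⟨a, ha, ha'⟩ := isCompact_Icc.exists_isMinOn (nonempty_Icc.2 hL.le) hc
  obtain ⟨b, hb, hb'⟩ := isCompact_Icc.exists_isMaxOn (nonempty_Icc.2 hL.le) hc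
  refine ⟨IccExtend hL.le ((Icc 0 L).domRestrict m), m a, m b,
    (continuousOn_iff_continuous_domRestrict.1 hc).Icc_extend', ?_, hpos a ha, hpos b hb, ?_, ?_⟩
  · intro x hx
    rw [IccExtend_of_mem _ _ hx]; rfl
  · intro x
    exact ha' (projIcc 0 L hL.le x).2
  · intro x
    exact hb' (projIcc 0 L hL.le x).2

lemma arith (L η β κ τ d0 d1 p0 p1 m1 : ℝ) (hL : 0 < L) (hη : 0 < η) (hβ : 0 < β)
    (hκ : 0 < κ) (hτ : 0 < τ) (hd0 : 0 < d0) (hd1 : 0 < d1) (hp0 : 0 < p0) (hp1 : 0 < p1)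
    (hm1 : 0 < m1) :
    ∃ C > (0 : ℝ), ∀ A B T S E U F1 G1 G2 G3 G4 : ℝ, 0 ≤ A → 0 ≤ B → 0 ≤ T → 0 ≤ S → 0 ≤ E →
      0 ≤ G1 → 0 ≤ G2 → 0 ≤ G3 → 0 ≤ G4 →
      B ≤ L ^ 2 * E → U ≤ L ^ 2 * A → F1 ≤ L ^ 2 * G1 →
      (∀ ε > 0, 2 * d0 * E + β * S ≤ p1 * (ε * A + ε⁻¹ * G1)
        + m1 * (ε * B + ε⁻¹ * G2) + (ε * T + ε⁻¹ * G3) + τ * (ε * S + ε⁻¹ * G4)) →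
      (∀ ε > 0, κ * T ≤ τ * (ε * (L ^ 2 * T) + ε⁻¹ * G4)
        + β * (ε * (L ^ 2 * T) + ε⁻¹ * S)
        + τ * (S + L ^ 2 * G3) + τ * κ * S + τ * η * (S + B)) →
      (∀ ε > 0, p0 * A ≤ η * (ε * A + ε⁻¹ * T) + m1 * B
        + m1 * (B + F1) + 2 * d1 * (ε * A + ε⁻¹ * E) + m1 * (ε * U + ε⁻¹ * G2)) →
      A + B + T + S ≤ C * (G1 + G2 + G3 + G4) := by
  obtain ⟨ε3, hε3, h3⟩ : ∃ ε > 0, (τ + β) * ε * L ^ 2 = κ / 2 :=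
    ⟨κ / (2 * (τ + β) * L ^ 2), by positivity, by field_simp⟩
  obtain ⟨ε4, hε4, h4⟩ : ∃ ε > 0, (η + 2 * d1 + m1 * L ^ 2) * ε = p0 / 2 :=
    ⟨p0 / (2 * (η + 2 * d1 + m1 * L ^ 2)), by positivity, by field_simp⟩
  obtain ⟨c3, hc3, h3'⟩ : ∃ c > 0, κ * c
      = 2 * (τ * ε3⁻¹ + β * ε3⁻¹ + τ + τ * κ + τ * η + τ * L ^ 2) :=
    ⟨2 * (τ * ε3⁻¹ + β * ε3⁻¹ + τ + τ * κ + τ * η + τ * L ^ 2) / κ, by positivity, by field_simp⟩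
  obtain ⟨c4, hc4, h4'⟩ : ∃ c > 0, p0 * c
      = 2 * (η * ε4⁻¹ + 2 * m1 + m1 * L ^ 2 + 2 * d1 * ε4⁻¹ + m1 * ε4⁻¹) :=
    ⟨2 * (η * ε4⁻¹ + 2 * m1 + m1 * L ^ 2 + 2 * d1 * ε4⁻¹ + m1 * ε4⁻¹) / p0,
      by positivity, by field_simp⟩
  obtain ⟨c5, hc5, h5⟩ : ∃ c > 0, c = c4 * (c3 * (1 + L ^ 2) + L ^ 2 + 1) + L ^ 2
      + c3 * (1 + L ^ 2) + 1 := ⟨_, by positivity, rfl⟩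
  obtain ⟨c6, hc6, h6, h6'⟩ : ∃ c > 0, c ≤ 2 * d0 ∧ c ≤ β :=
    ⟨min (2 * d0) β, by positivity, min_le_left _ _, min_le_right _ _⟩
  obtain ⟨K, hK, hKe⟩ : ∃ K > 0, K = p1 + m1 + 1 + τ := ⟨_, by positivity, rfl⟩
  obtain ⟨ε, hε, h1⟩ : ∃ ε > 0, c5 * K * ε = c6 / 2 :=
    ⟨c6 / (2 * c5 * K), by positivity, by field_simp⟩
  refine ⟨2 * (c5 * K * ε⁻¹ + c6 * c5) / c6, by positivity, ?_⟩
  intro A B T S E U F1 G1 G2 G3 G4 hA hB hT hS hE hG1 hG2 hG3 hG4 iB iU iF e1 e3 e4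
  obtain ⟨G, hG⟩ : ∃ G, G = G1 + G2 + G3 + G4 := ⟨_, rfl⟩
  obtain ⟨W, hW⟩ : ∃ W, W = E + S + G := ⟨_, rfl⟩
  have hG0 : 0 ≤ G := by rw [hG]; positivity
  have hW0 : 0 ≤ W := by rw [hW]; positivity
  rw [← hG]
  have bB : B ≤ L ^ 2 * W := iB.trans (by gcongr; linarith)
  have bT : T ≤ c3 * (1 + L ^ 2) * W := by
    have h := e3 ε3 hε3
    have hX : 0 ≤ W + B := by positivity
    have a1 : τ * ε3⁻¹ * G4 ≤ τ * ε3⁻¹ * (W + B) := by gcongr; linarith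
    have a2 : β * ε3⁻¹ * S ≤ β * ε3⁻¹ * (W + B) := by gcongr; linarith
    have a3 : τ * S ≤ τ * (W + B) := by gcongr; linarith
    have a4 : τ * L ^ 2 * G3 ≤ τ * L ^ 2 * (W + B) := by gcongr; linarith
    have a5 : τ * κ * S ≤ τ * κ * (W + B) := by gcongr; linarith
    have a6 : τ * η * (S + B) ≤ τ * η * (W + B) := by gcongr; linarith
    have a7 : (τ + β) * ε3 * L ^ 2 * T = κ / 2 * T := by rw [h3]
    have a8 := congrArg (fun t => t * (W + B)) h3'
    beta_reduce at a8
    have a9 : κ * T ≤ κ * (c3 * (W + B)) := by linarith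
    have b1 : T ≤ c3 * (W + B) := le_of_mul_le_mul_left a9 hκ
    calc T ≤ c3 * (W + B) := b1
      _ ≤ c3 * (W + L ^ 2 * W) := by gcongr
      _ = _ := by ring
  have bA : A ≤ c4 * (c3 * (1 + L ^ 2) + L ^ 2 + 1) * W := by
    have h := e4 ε4 hε4
    have hX : 0 ≤ T + B + W := by positivity
    have a1 : η * ε4⁻¹ * T ≤ η * ε4⁻¹ * (T + B + W) := by gcongr; linarith
    have a2 : m1 * B ≤ m1 * (T + B + W) := by gcongr; linarith
    have a3 : m1 * F1 ≤ m1 * (L ^ 2 * G1) := by gcongr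
    have a4 : m1 * L ^ 2 * G1 ≤ m1 * L ^ 2 * (T + B + W) := by gcongr; linarith
    have a5 : 2 * d1 * ε4⁻¹ * E ≤ 2 * d1 * ε4⁻¹ * (T + B + W) := by gcongr; linarith
    have a6 : m1 * ε4⁻¹ * G2 ≤ m1 * ε4⁻¹ * (T + B + W) := by gcongr; linarith
    have a6' : m1 * ε4 * U ≤ m1 * ε4 * (L ^ 2 * A) := by gcongr
    have a7 : (η + 2 * d1 + m1 * L ^ 2) * ε4 * A = p0 / 2 * A := by rw [h4]
    have a8 := congrArg (fun t => t * (T + B + W)) h4'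
    beta_reduce at a8
    have a9 : p0 * A ≤ p0 * (c4 * (T + B + W)) := by linarith
    have b1 : A ≤ c4 * (T + B + W) := le_of_mul_le_mul_left a9 hp0
    calc A ≤ c4 * (T + B + W) := b1
      _ ≤ c4 * (c3 * (1 + L ^ 2) * W + L ^ 2 * W + W) := by gcongr
      _ = _ := by ring
  obtain ⟨V, hV⟩ : ∃ V, V = A + B + T + S := ⟨_, rfl⟩
  rw [← hV]
  have hV0 : 0 ≤ V := by rw [hV]; positivity
  have bV : V ≤ c5 * W := by
    rw [h5, hV]
    linarith
  have bW : c6 * W ≤ K * (ε * V + ε⁻¹ * G) + c6 * G := by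
    have h := e1 ε hε
    have a0 : c6 * E ≤ 2 * d0 * E := by gcongr
    have a0' : c6 * S ≤ β * S := by gcongr
    have hi : 0 < ε⁻¹ := by positivity
    have a1 : p1 * (ε * A + ε⁻¹ * G1) ≤ p1 * (ε * V + ε⁻¹ * G) := by
      gcongr <;> linarith
    have a2 : m1 * (ε * B + ε⁻¹ * G2) ≤ m1 * (ε * V + ε⁻¹ * G) := by
      gcongr <;> linarith
    have a3 : (ε * T + ε⁻¹ * G3) ≤ (ε * V + ε⁻¹ * G) := by
      gcongr <;> linarith
    have a4 : τ * (ε * S + ε⁻¹ * G4) ≤ τ * (ε * V + ε⁻¹ * G) := by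
      gcongr <;> linarith
    rw [hW, hKe]
    linarith
  have f1 : c6 * V ≤ c5 * (c6 * W) := by
    have := mul_le_mul_of_nonneg_left bV hc6.le
    linarith
  have f2 := mul_le_mul_of_nonneg_left bW hc5.le
  have f3 : c5 * K * ε * V = c6 / 2 * V := by rw [h1]
  rw [div_mul_eq_mul_div, le_div_iff₀ hc6]
  linarith

/-- Uniform resolvent bound on the imaginary axis. -/
theorem uniform_resolvent_bound
    (L η β κ τ : ℝ) (hL : 0 < L) (hη : 0 < η) (hβ : 0 < β) (hκ : 0 < κ) (hτ : 0 < τ)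
    (m δ p : ℝ → ℝ)
    (hmLip : ∃ K, LipschitzOnWith K m (Icc 0 L))
    (hδLip : ∃ K, LipschitzOnWith K δ (Icc 0 L))
    (hpLip : ∃ K, LipschitzOnWith K p (Icc 0 L))
    (hmpos : ∀ x ∈ Icc (0 : ℝ) L, 0 < m x)
    (hδpos : ∀ x ∈ Icc (0 : ℝ) L, 0 < δ x)
    (hppos : ∀ x ∈ Icc (0 : ℝ) L, 0 < p x)
    :
    ∃ C > (0 : ℝ),
      ∀ (lam : ℝ) (f₁ f₂ f₃ f₄ u w θ q : ℝ → ℂ),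
        ResolventSol L η β κ τ m δ p lam f₁ f₂ f₃ f₄ u w θ q →
          (∫ x in (0 : ℝ)..L, θ x) = 0 →
            Real.sqrt (normUsq L τ m p u w θ q)
              ≤ C * Real.sqrt (normFsq L τ m p f₁ f₂ f₃ f₄) := by
  obtain ⟨M, m0, m1, hM, hmM, hm0, hm1, hMlo, hMhi⟩ := ext_bounds hL hmLip hmpos
  obtain ⟨D, d0, d1, hD, hδD, hd0, hd1, hDlo, hDhi⟩ := ext_bounds hL hδLip hδpos
  obtain ⟨P, p0, p1, hP, hpP, hp0, hp1, hPlo, hPhi⟩ := ext_bounds hL hpLip hppos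
  obtain ⟨C, hC, H⟩ := arith L η β κ τ d0 d1 p0 p1 m1 hL hη hβ hκ hτ hd0 hd1 hp0 hp1 hm1
  obtain ⟨k, hk, k1, k2, k3, k4⟩ : ∃ k > 0, k ≤ p0 ∧ k ≤ m0 ∧ k ≤ 1 ∧ k ≤ τ :=
    ⟨min (min p0 m0) (min 1 τ), by positivity, by simp, by simp, by simp, by simp⟩
  obtain ⟨K, hK, K1⟩ : ∃ K > 0, K = p1 + m1 + 1 + τ := ⟨_, by positivity, rfl⟩
  refine ⟨Real.sqrt (K * C / k), by positivity, ?_⟩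
  rintro lam f₁ f₂ f₃ f₄ u w θ q
    ⟨su, sw, sθ, sq, sf₁, sf₂, sf₃, sf₄, heq, u0, uL, w0, wL, q0, qL⟩ hmean
  rw [← Real.sqrt_mul (by positivity)]
  apply Real.sqrt_le_sqrt
  -- smoothness bookkeeping
  have hder : ∀ {g : ℝ → ℂ}, ContDiff ℝ (⊤ : ℕ∞) g → ∀ x, HasDerivAt g (deriv g x) x :=
    fun hg x => (hg.differentiable (by simp) x).hasDerivAt
  have hder' : ∀ {g : ℝ → ℂ}, ContDiff ℝ (⊤ : ℕ∞) g → ContDiff ℝ (⊤ : ℕ∞) (deriv g) :=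
    fun hg => (contDiff_infty_iff_deriv.1 hg).2
  have h1 : ∀ {g : ℝ → ℂ}, ContDiff ℝ (⊤ : ℕ∞) g → ContDiff ℝ 1 g :=
    fun hg => hg.of_le (by exact_mod_cast le_top)
  have hcd : ∀ {g : ℝ → ℂ}, ContDiff ℝ (⊤ : ℕ∞) g → Continuous (deriv g) :=
    fun hg => (hder' hg).continuous
  have ccu := su.continuous
  have ccw := sw.continuous
  have ccθ := sθ.continuous
  have ccq := sq.continuous
  have cc1 := sf₁.continuous
  have cc2 := sf₂.continuous
  have cc3 := sf₃.continuous
  have cc4 := sf₄.continuous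
  have cdu := hcd su
  have cdw := hcd sw
  have cdθ := hcd sθ
  have cdq := hcd sq
  have cd1 := hcd sf₁
  have ext : ∀ {a b : ℝ → ℂ}, Continuous a → Continuous b → (∀ x ∈ Ioo 0 L, a x = b x) →
      ∀ x ∈ Icc 0 L, a x = b x := by
    intro a b ha hb h x hx
    have := Set.EqOn.closure (s := Ioo 0 L) (f := a) (g := b) h ha hb
    rw [closure_Ioo hL.ne] at this
    exact this hx
  have e1 : ∀ x ∈ Icc 0 L, Complex.I * (lam : ℂ) * u x - w x = f₁ x :=
    ext (by fun_prop) cc1 (fun x hx => (heq x hx).1)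
  have e1' : ∀ x ∈ Icc 0 L, Complex.I * (lam : ℂ) * deriv u x - deriv w x = deriv f₁ x := by
    refine ext (by fun_prop) cd1 (fun x hx => ?_)
    have hd := ((hder su x).const_mul (Complex.I * (lam : ℂ))).sub (hder sw x)
    rw [← hd.deriv]
    apply Filter.EventuallyEq.deriv_eq
    filter_upwards [isOpen_Ioo.mem_nhds hx] with y hy
    exact (heq y hy).1
  have e3 : ∀ x ∈ Icc 0 L,
      Complex.I * (lam : ℂ) * θ x + (κ * deriv q x + η * deriv w x) = f₃ x := by
    refine ext (by fun_prop) cc3 (fun x hx => ?_)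
    have hd := ((hder sq x).const_mul (κ : ℂ)).fun_add ((hder sw x).const_mul (η : ℂ))
    rw [← (heq x hx).2.2.1, hd.deriv]
  have e4 : ∀ x ∈ Icc 0 L,
      Complex.I * (lam : ℂ) * (τ : ℂ) * q x + (κ : ℂ) * deriv θ x + (β : ℂ) * q x
        = (τ : ℂ) * f₄ x :=
    ext (by fun_prop) (by fun_prop) (fun x hx => (heq x hx).2.2.2)
  have f10 : f₁ 0 = 0 := by rw [← e1 0 ⟨le_rfl, hL.le⟩, u0, w0]; simp
  have hwk : ∀ φ : ℝ → ℂ, ContDiff ℝ (⊤ : ℕ∞) φ → φ 0 = 0 → φ L = 0 →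
      ∫ x in (0 : ℝ)..L, wk η lam M D P f₂ (deriv u) w (deriv w) (deriv θ) φ (deriv φ) x = 0 := by
    intro φ hφ φ0 φL
    refine Eq.trans ?_ (weak hL hδLip hpLip (h1 (hder' su)) (h1 (hder' sw)) (h1 hφ) (hder hφ) φ0 φL
      (fun x hx => (heq x hx).2.1))
    refine intervalIntegral.integral_congr (fun x hx => ?_)
    rw [uIcc_of_le hL.le] at hx
    simp only [wk, hmM hx, hδD hx, hpP hx]
  have hP0 : ∀ x, 0 ≤ P x := fun x => hp0.le.trans (hPlo x)
  have hM0 : ∀ x, 0 ≤ M x := fun x => hm0.le.trans (hMlo x)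
  have hD0 : ∀ x, 0 ≤ D x := fun x => hd0.le.trans (hDlo x)
  have main := H (Jsq L (deriv u)) (Jsq L w) (Jsq L θ) (Jsq L q) (Jsq L (deriv w)) (Jsq L u)
    (Jsq L f₁) (Jsq L (deriv f₁)) (Jsq L f₂) (Jsq L f₃) (Jsq L f₄)
    (Jsq_nonneg hL _) (Jsq_nonneg hL _) (Jsq_nonneg hL _) (Jsq_nonneg hL _) (Jsq_nonneg hL _)
    (Jsq_nonneg hL _) (Jsq_nonneg hL _) (Jsq_nonneg hL _) (Jsq_nonneg hL _)
    (poincare hL (hder sw) cdw w0) (poincare hL (hder su) cdu u0)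
    (poincare hL (hder sf₁) cd1 f10)
    (fun ε hε => est1 hL hτ hε hM hD hP hDlo hP0 hPhi hM0 hMhi cd1 cc2 cc3 cc4 cdu cdw cdθ cdq
      (hder sw) (hder sθ) (hder sq) w0 wL q0 qL e1' e3 e4 (hwk w sw w0 wL))
    (fun ε hε => est3 hL hη hβ hτ hε cc3 cc4 cdw cdθ cdq
      (hder sw) (hder sθ) (hder sq) w0 q0 hmean e3 e4)
    (fun ε hε => est4 hL hη hε hM hD hP hD0 hDhi hPlo hM0 hMhi cc1 cc2 cdu cdw cdθ
      (hder su) ccw (hder sθ) u0 uL e1 (hwk u su u0 uL))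
  -- comparison of weighted and unweighted norms
  have up : ∀ {N : ℝ → ℝ} {n : ℝ → ℝ} {c : ℝ} {g : ℝ → ℂ}, Continuous N → EqOn n N (Icc 0 L) →
      (∀ x, N x ≤ c) → Continuous g → ∫ x in (0 : ℝ)..L, n x * ‖g x‖ ^ 2 ≤ c * Jsq L g := by
    intro N n c g hN hnN hc hg
    rw [Jsq, ← intervalIntegral.integral_const_mul]
    rw [intervalIntegral.integral_congr (f := fun x => n x * ‖g x‖ ^ 2)
      (g := fun x => N x * ‖g x‖ ^ 2) (fun x hx => by
      rw [uIcc_of_le hL.le] at hx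
      simp only [hnN hx])]
    refine intervalIntegral.integral_mono_on hL.le
      (Continuous.intervalIntegrable (by fun_prop) _ _)
      (Continuous.intervalIntegrable (by fun_prop) _ _) (fun x _ => ?_)
    gcongr
    exact hc x
  have lo : ∀ {N : ℝ → ℝ} {n : ℝ → ℝ} {c : ℝ} {g : ℝ → ℂ}, Continuous N → EqOn n N (Icc 0 L) →
      (∀ x, c ≤ N x) → Continuous g → c * Jsq L g ≤ ∫ x in (0 : ℝ)..L, n x * ‖g x‖ ^ 2 := by
    intro N n c g hN hnN hc hg
    rw [Jsq, ← intervalIntegral.integral_const_mul]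
    rw [intervalIntegral.integral_congr (f := fun x => n x * ‖g x‖ ^ 2)
      (g := fun x => N x * ‖g x‖ ^ 2) (fun x hx => by
      rw [uIcc_of_le hL.le] at hx
      simp only [hnN hx])]
    refine intervalIntegral.integral_mono_on hL.le
      (Continuous.intervalIntegrable (by fun_prop) _ _)
      (Continuous.intervalIntegrable (by fun_prop) _ _) (fun x _ => ?_)
    gcongr
    exact hc x
  have hU : normUsq L τ m p u w θ q
      ≤ K * (Jsq L (deriv u) + Jsq L w + Jsq L θ + Jsq L q) := by
    have a1 := up hP hpP hPhi cdu
    have a2 := up hM hmM hMhi ccw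
    have n1 := Jsq_nonneg hL (deriv u)
    have n2 := Jsq_nonneg hL w
    have n3 := Jsq_nonneg hL θ
    have n4 := Jsq_nonneg hL q
    have b1 : p1 * Jsq L (deriv u) ≤ K * Jsq L (deriv u) := by gcongr; linarith
    have b2 : m1 * Jsq L w ≤ K * Jsq L w := by gcongr; linarith
    have b3 : 1 * Jsq L θ ≤ K * Jsq L θ := by gcongr; linarith
    have b4 : τ * Jsq L q ≤ K * Jsq L q := by gcongr; linarith
    unfold normUsq
    change _ + _ + Jsq L θ + τ * Jsq L q ≤ _
    linarith
  have hF : k * (Jsq L (deriv f₁) + Jsq L f₂ + Jsq L f₃ + Jsq L f₄)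
      ≤ normFsq L τ m p f₁ f₂ f₃ f₄ := by
    have a1 := lo hP hpP hPlo cd1
    have a2 := lo hM hmM hMlo cc2
    have n1 := Jsq_nonneg hL (deriv f₁)
    have n2 := Jsq_nonneg hL f₂
    have n3 := Jsq_nonneg hL f₃
    have n4 := Jsq_nonneg hL f₄
    have b1 : k * Jsq L (deriv f₁) ≤ p0 * Jsq L (deriv f₁) := by gcongr
    have b2 : k * Jsq L f₂ ≤ m0 * Jsq L f₂ := by gcongr
    have b3 : k * Jsq L f₃ ≤ 1 * Jsq L f₃ := by gcongr
    have b4 : k * Jsq L f₄ ≤ τ * Jsq L f₄ := by gcongr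
    unfold normFsq
    change _ ≤ _ + _ + Jsq L f₃ + τ * Jsq L f₄
    linarith
  calc normUsq L τ m p u w θ q ≤ K * (C * (Jsq L (deriv f₁) + Jsq L f₂ + Jsq L f₃ + Jsq L f₄)) :=
        hU.trans (by gcongr)
    _ = K * C / k * (k * (Jsq L (deriv f₁) + Jsq L f₂ + Jsq L f₃ + Jsq L f₄)) := by
        field_simp
    _ ≤ _ := by gcongr
end
end
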